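/- arXiv:0811.1290 — 3 statements merged into one kernel-verified Lean document; each statement's English description precedes it below -/
import Mathlib

section
/- Let α be a non-zero pre-homogeneous dimension vector of Q, let σ be either ⟨α,·⟩ or −⟨·,α⟩, and let E_1,…,E_l be the pairwise non-isomorphic σ-stable representations, with β_i = dim E_i. Then, after rearranging, (β_1,…,β_l) is a quiver exceptional sequence. -/
set_option autoImplicit false

noncomputable section

open scoped BigOperators

/-! Basic setup for representations of a quiver with vertex set `V`, arrow set `A`,
tail map `t` and head map `h`, over a field `K`. -/

variable (K : Type) [Field K]
variable {V A : Type} [Fintype V] [DecidableEq V] [Fintype A]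

/-- The Euler form of the quiver `(V, A, t, h)`. -/
def eulerForm {R : Type} [CommRing R] (t h : A → V) (x y : V → R) : R :=
  ∑ i, x i * y i - ∑ a, x (t a) * y (h a)

def natZ (x : V → ℕ) : V → ℤ := fun i => (x i : ℤ)
def intQ (x : V → ℤ) : V → ℚ := fun i => (x i : ℚ)
def natQ (x : V → ℕ) : V → ℚ := fun i => (x i : ℚ)

/-- The weight `⟨α,·⟩`. -/
def weightL (t h : A → V) (α : V → ℤ) : V → ℤ :=
  fun i => eulerForm t h α (fun j => if j = i then 1 else 0)

/-- The weight `−⟨·,α⟩`. -/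
def weightR (t h : A → V) (α : V → ℤ) : V → ℤ :=
  fun i => - eulerForm t h (fun j => if j = i then 1 else 0) α

/-- `IsPathFrom t h i p j` : the list of arrows `p` is a path from `i` to `j`. -/
def IsPathFrom (t h : A → V) : V → List A → V → Prop
  | i, [], j => i = j
  | i, a :: p, j => t a = i ∧ IsPathFrom t h (h a) p j

/-- The quiver has no (nontrivial) oriented cycles. -/
def Acyclic (t h : A → V) : Prop := ∀ (i : V) (p : List A), IsPathFrom t h i p i → p = []

/-- The dimension vector `γ_i` of the projective indecomposable at `i`:
`γ_i(j)` is the number of paths from `i` to `j`. -/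
def gammaRoot (t h : A → V) (i : V) : V → ℕ :=
  fun j => Set.ncard {p : List A | IsPathFrom t h i p j}

/-- A finite-dimensional representation of the quiver `(V, A, t, h)` over `K`. -/
structure QuivRep (K : Type) [Field K] (V A : Type) (t h : A → V) : Type 1 where
  sp : V → Type
  [inst1 : ∀ i, AddCommGroup (sp i)]
  [inst2 : ∀ i, Module K (sp i)]
  [inst3 : ∀ i, FiniteDimensional K (sp i)]
  map : ∀ a : A, sp (t a) →ₗ[K] sp (h a)

attribute [instance] QuivRep.inst1 QuivRep.inst2 QuivRep.inst3

namespace QuivRep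

variable {K} {t h : A → V}

/-- The dimension vector of a representation. -/
def dimVec (X : QuivRep K V A t h) : V → ℕ := fun i => Module.finrank K (X.sp i)

/-- A subrepresentation. -/
structure Sub (X : QuivRep K V A t h) where
  sub : ∀ i, Submodule K (X.sp i)
  le : ∀ a : A, ∀ x ∈ sub (t a), X.map a x ∈ sub (h a)

/-- The dimension vector of a subrepresentation. -/
def Sub.dimVec {X : QuivRep K V A t h} (U : Sub X) : V → ℕ :=
  fun i => Module.finrank K (U.sub i)

/-- The space `Hom_Q(X,Y)` of morphisms of representations, as a submodule of
`Π i, Hom_K(X(i),Y(i))`. -/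
def homS (X Y : QuivRep K V A t h) : Submodule K (∀ i, X.sp i →ₗ[K] Y.sp i) where
  carrier := {φ | ∀ a : A, (φ (h a)).comp (X.map a) = (Y.map a).comp (φ (t a))}
  zero_mem' := by intro a; simp
  add_mem' := by
    intro f g hf hg a
    simp only [Pi.add_apply, LinearMap.add_comp, LinearMap.comp_add, hf a, hg a]
  smul_mem' := by
    intro c f hf a
    simp only [Pi.smul_apply, LinearMap.smul_comp, LinearMap.comp_smul, hf a]

/-- The dimension of `Hom_Q(X,Y)`. -/
def homDim (X Y : QuivRep K V A t h) : ℕ := Module.finrank K (homS X Y)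

/-- The map `d^X_Y` from Ringel's canonical exact sequence. -/
def dmap (X Y : QuivRep K V A t h) :
    (∀ i, X.sp i →ₗ[K] Y.sp i) →ₗ[K] (∀ a : A, X.sp (t a) →ₗ[K] Y.sp (h a)) where
  toFun φ := fun a => (φ (h a)).comp (X.map a) - (Y.map a).comp (φ (t a))
  map_add' f g := by
    funext a
    simp only [Pi.add_apply, LinearMap.add_comp, LinearMap.comp_add]
    abel
  map_smul' c f := by
    funext a
    simp only [Pi.smul_apply, LinearMap.smul_comp, LinearMap.comp_smul, smul_sub,
      RingHom.id_apply]

/-- The dimension of `Ext^1_Q(X,Y)`, i.e. of the cokernel of `d^X_Y`. -/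
def extDim (X Y : QuivRep K V A t h) : ℕ :=
  Module.finrank K ((∀ a : A, X.sp (t a) →ₗ[K] Y.sp (h a)) ⧸ LinearMap.range (dmap X Y))

/-- A rigid representation: `Ext^1_Q(X,X) = 0`. -/
def IsRigid (X : QuivRep K V A t h) : Prop := extDim X X = 0

/-- A Schur representation: `End_Q(X) = K·id`. -/
def IsSchur (X : QuivRep K V A t h) : Prop := homDim X X = 1

/-- An exceptional representation: rigid and Schur. -/
def IsExceptional (X : QuivRep K V A t h) : Prop := IsRigid X ∧ IsSchur X

end QuivRep

/-- `β` is a real Schur root: the dimension vector of an exceptional representation. -/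
def isRealSchurRoot (t h : A → V) (β : V → ℕ) : Prop :=
  ∃ X : QuivRep K V A t h, X.dimVec = β ∧ X.IsExceptional

/-- `ext_Q(α,β)` : the generic (minimal) value of `dim Ext^1_Q` on pairs of
representations of dimension vectors `α`, `β`. -/
def extMin (t h : A → V) (α β : V → ℕ) : ℕ :=
  sInf {n | ∃ X Y : QuivRep K V A t h, X.dimVec = α ∧ Y.dimVec = β ∧ QuivRep.extDim X Y = n}

/-- `hom_Q(α,β)` : the generic (minimal) value of `dim Hom_Q`. -/
def homMin (t h : A → V) (α β : V → ℕ) : ℕ :=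
  sInf {n | ∃ X Y : QuivRep K V A t h, X.dimVec = α ∧ Y.dimVec = β ∧ QuivRep.homDim X Y = n}

/-- `β' ↪ β` : every representation of dimension vector `β` has a subrepresentation of
dimension vector `β'`. -/
def Embeds (t h : A → V) (β' β : V → ℕ) : Prop :=
  ∀ X : QuivRep K V A t h, X.dimVec = β → ∃ U : QuivRep.Sub X, U.dimVec = β'

/-- `σ`-semi-stability of a representation. -/
def IsSemistable {t h : A → V} (σ : V → ℤ) (X : QuivRep K V A t h) : Prop :=
  (∑ i, σ i * (X.dimVec i : ℤ)) = 0 ∧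
  ∀ U : QuivRep.Sub X, (∑ i, σ i * (U.dimVec i : ℤ)) ≤ 0

/-- `σ`-stability of a representation. -/
def IsStable {t h : A → V} (σ : V → ℤ) (X : QuivRep K V A t h) : Prop :=
  (∑ i, σ i * (X.dimVec i : ℤ)) = 0 ∧ X.dimVec ≠ (fun _ => 0) ∧
  ∀ U : QuivRep.Sub X, U.dimVec ≠ (fun _ => 0) → U.dimVec ≠ X.dimVec →
    (∑ i, σ i * (U.dimVec i : ℤ)) < 0

/-- Isomorphism of representations. -/
def RepIso {t h : A → V} (X Y : QuivRep K V A t h) : Prop :=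
  ∃ e : ∀ i, X.sp i ≃ₗ[K] Y.sp i,
    ∀ (a : A) (x : X.sp (t a)), e (h a) (X.map a x) = Y.map a (e (t a) x)

/-- A quiver exceptional sequence of dimension vectors. -/
def IsQES (t h : A → V) {l : ℕ} (b : Fin l → V → ℕ) : Prop :=
  (∀ j, isRealSchurRoot K t h (b j)) ∧
  ∀ i j : Fin l, i < j →
    homMin K t h (b i) (b j) = 0 ∧ extMin K t h (b i) (b j) = 0 ∧
      eulerForm t h (natZ (b j)) (natZ (b i)) ≤ 0

/-- The cone of nonnegative rational linear combinations of a finite set of integral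
vectors. -/
def coneOf (C : Finset (V → ℤ)) : Set (V → ℚ) :=
  {x | ∃ lam : (V → ℤ) → ℚ, (∀ c, 0 ≤ lam c) ∧ x = ∑ c ∈ C, lam c • intQ c}

/-- A compatible subset of the set `Ψ(Q)_{≥ -1}` of almost positive real Schur roots. -/
def IsCompatible (t h : A → V) (C : Finset (V → ℤ)) : Prop :=
  (∀ x ∈ C, (∃ β : V → ℕ, isRealSchurRoot K t h β ∧ x = natZ β) ∨
      (∃ i : V, x = fun j => -(gammaRoot t h i j : ℤ))) ∧
  (∀ x ∈ C, ∀ y ∈ C, x ≠ y →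
    (∀ β₁ β₂ : V → ℕ, isRealSchurRoot K t h β₁ → isRealSchurRoot K t h β₂ →
      x = natZ β₁ → y = natZ β₂ → extMin K t h β₁ β₂ = 0) ∧
    (∀ (β : V → ℕ) (i : V), isRealSchurRoot K t h β →
      x = natZ β → y = (fun j => -(gammaRoot t h i j : ℤ)) → β i = 0))

/-- The domain of semi-invariants `D(β) ⊆ ℚ^{Q_0}`. -/
def Dom (t h : A → V) (β : V → ℕ) : Set (V → ℚ) :=
  {x | eulerForm t h x (natQ β) = 0 ∧
    ∀ β' : V → ℕ, Embeds K t h β' β → eulerForm t h x (natQ β') ≤ 0}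

/-- A quiver exceptional set: a subset of `Ψ(Q)_{≥ -1}` of the form
`{β_1,…,β_l, −γ_{i_{l+1}},…,−γ_{i_m}}` with `β_j(i_k) = 0` and whose real-Schur-root part
can be ordered into a quiver exceptional sequence. -/
def IsQExcSet (t h : A → V) (E : Finset (V → ℤ)) : Prop :=
  ∃ (l m : ℕ) (b : Fin l → V → ℕ) (g : Fin m → V),
    Function.Injective b ∧ Function.Injective g ∧ IsQES K t h b ∧
    (∀ j k, b j (g k) = 0) ∧
    (E : Set (V → ℤ)) =
      (Set.range fun j => natZ (b j)) ∪
      (Set.range fun k => (fun v => -(gammaRoot t h (g k) v : ℤ)))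


/-- The underlying graph of the quiver is connected. -/
def IsConnectedQuiver (t h : A → V) : Prop :=
  ∀ i j : V,
    Relation.ReflTransGen (fun u v => ∃ a, (t a = u ∧ h a = v) ∨ (t a = v ∧ h a = u)) i j

/-- Morphisms of representations. -/
structure RepHom {K : Type} [Field K] {V A : Type} {t h : A → V}
    (X Y : QuivRep K V A t h) : Type where
  app : ∀ i, X.sp i →ₗ[K] Y.sp i
  comm : ∀ a : A, (app (h a)).comp (X.map a) = (Y.map a).comp (app (t a))

namespace RepHom

variable {K₀ : Type} [Field K₀] {t h : A → V}

/-- The identity morphism. -/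
def idHom (X : QuivRep K₀ V A t h) : RepHom X X :=
  ⟨fun _ => LinearMap.id, fun a => by ext x; simp⟩

/-- Composition of morphisms. -/
def comp {X Y Z : QuivRep K₀ V A t h} (f : RepHom X Y) (g : RepHom Y Z) : RepHom X Z :=
  ⟨fun i => (g.app i).comp (f.app i), fun a => by
    ext x
    have hf := LinearMap.congr_fun (f.comm a) x
    have hg := LinearMap.congr_fun (g.comm a) (f.app (t a) x)
    simp only [LinearMap.comp_apply] at hf hg ⊢
    rw [hf, hg]⟩

/-- Sum of morphisms. -/
def add {X Y : QuivRep K₀ V A t h} (f g : RepHom X Y) : RepHom X Y :=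
  ⟨fun i => f.app i + g.app i, fun a => by
    simp only [LinearMap.add_comp, LinearMap.comp_add, f.comm a, g.comm a]⟩

/-- Scalar multiple of a morphism. -/
def smul {X Y : QuivRep K₀ V A t h} (c : K₀) (f : RepHom X Y) : RepHom X Y :=
  ⟨fun i => c • f.app i, fun a => by
    simp only [LinearMap.smul_comp, LinearMap.comp_smul, f.comm a]⟩

end RepHom

/-- The number of arrows `i → j` in the Ext-quiver `Q(𝓔)` of a sequence of dimension
vectors: `−⟨β_i, β_j⟩` for `i ≠ j`. -/
def extMult (t h : A → V) {l : ℕ} (b : Fin l → V → ℕ) (i j : Fin l) : ℕ :=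
  if i = j then 0 else (-(eulerForm t h (natZ (b i)) (natZ (b j)))).toNat

/-- The arrow set of the Ext-quiver `Q(𝓔)`. -/
abbrev ExtArrow (t h : A → V) {l : ℕ} (b : Fin l → V → ℕ) : Type :=
  (i : Fin l) × (j : Fin l) × Fin (extMult t h b i j)

/-- The representation space `rep(Q,β)` as a product of matrix spaces. -/
abbrev RepSpace (t h : A → V) (β : V → ℕ) : Type :=
  ∀ a : A, Matrix (Fin (β (h a))) (Fin (β (t a))) K

/-- The (base-change) action of `GL(β)` on `rep(Q,β)`. -/
def glAct (t h : A → V) {β : V → ℕ}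
    (g : ∀ i, Matrix.GeneralLinearGroup (Fin (β i)) K) (W : RepSpace K t h β) :
    RepSpace K t h β :=
  fun a => (g (h a) : Matrix (Fin (β (h a))) (Fin (β (h a))) K) * W a *
    (((g (t a))⁻¹ : Matrix.GeneralLinearGroup (Fin (β (t a))) K) :
      Matrix (Fin (β (t a))) (Fin (β (t a))) K)

/-- A polynomial function on `rep(Q,β)`. -/
def IsPolyFun (t h : A → V) {β : V → ℕ} (f : RepSpace K t h β → K) : Prop :=
  ∃ P : MvPolynomial ((a : A) × (Fin (β (h a)) × Fin (β (t a)))) K,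
    ∀ W, f W = MvPolynomial.eval (fun x => W x.1 x.2.1 x.2.2) P

/-- The weight space `SI(Q,β)_σ` of semi-invariant polynomial functions of weight `σ`. -/
def SIweight (t h : A → V) (β : V → ℕ) (σ : V → ℤ) :
    Submodule K (RepSpace K t h β → K) where
  carrier := {f | IsPolyFun K t h f ∧
    ∀ (g : ∀ i, Matrix.GeneralLinearGroup (Fin (β i)) K) (W : RepSpace K t h β),
      f (glAct K t h g W) =
        (((∏ i, (Matrix.GeneralLinearGroup.det (g i)) ^ σ i : Kˣ) : K)) * f W}
  zero_mem' := by
    refine ⟨⟨0, by simp⟩, by simp⟩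
  add_mem' := by
    rintro f g ⟨⟨P, hP⟩, hf⟩ ⟨⟨Q, hQ⟩, hg⟩
    refine ⟨⟨P + Q, fun W => ?_⟩, fun gg W => ?_⟩
    · simp [hP W, hQ W]
    · simp only [Pi.add_apply, hf gg W, hg gg W]; ring
  smul_mem' := by
    rintro c f ⟨⟨P, hP⟩, hf⟩
    refine ⟨⟨MvPolynomial.C c * P, fun W => ?_⟩, fun gg W => ?_⟩
    · simp [hP W]
    · simp only [Pi.smul_apply, hf gg W, smul_eq_mul]; ring

/-- Entry of a matrix accessed through natural-number indices. -/
def entryN {m n : ℕ} (M : Matrix (Fin m) (Fin n) K) (r c : ℕ) : K :=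
  if hr : r < m then (if hc : c < n then M ⟨r, hr⟩ ⟨c, hc⟩ else 0) else 0

/-- The matrix of the map `d^V_W` (with `V` of dimension vector `α` varying and `W` of
dimension vector `w` fixed), in the standard bases. -/
def schofieldMatrix (t h : A → V) {α w : V → ℕ}
    (Vm : RepSpace K t h α) (W : RepSpace K t h w) :
    Matrix ((a : A) × (Fin (w (h a)) × Fin (α (t a)))) ((i : V) × (Fin (w i) × Fin (α i))) K :=
  fun r c =>
    (if c.1 = h r.1 ∧ (c.2.1 : ℕ) = (r.2.1 : ℕ) then
      entryN K (Vm r.1) (c.2.2 : ℕ) (r.2.2 : ℕ) else 0)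
    - (if c.1 = t r.1 ∧ (c.2.2 : ℕ) = (r.2.2 : ℕ) then
      entryN K (W r.1) (r.2.1 : ℕ) (c.2.1 : ℕ) else 0)

/-- The Schofield semi-invariant `c_W : rep(Q,α) → K`, `V ↦ det d^V_W` (defined when
`⟨α, dim W⟩ = 0`, i.e. when `d^V_W` is a square matrix). -/
def schofieldSI (t h : A → V) {α w : V → ℕ} (W : RepSpace K t h w)
    (Vm : RepSpace K t h α) : K :=
  if hc : Fintype.card ((i : V) × (Fin (w i) × Fin (α i))) =
      Fintype.card ((a : A) × (Fin (w (h a)) × Fin (α (t a)))) then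
    ((schofieldMatrix K t h Vm W).submatrix (Fintype.equivOfCardEq hc) id).det
  else 0

/-- The representation of `Q` attached to a point of `rep(Q,β)`. -/
def toRep (t h : A → V) {β : V → ℕ} (W : RepSpace K t h β) : QuivRep K V A t h where
  sp i := Fin (β i) → K
  map a := Matrix.mulVecLin (W a)

namespace StmtAux

section basics

variable {K : Type} [Field K] {V A : Type} {t h : A → V}

/-- Morphism condition, pointwise. -/
def IsHom (X Y : QuivRep K V A t h) (f : ∀ i, X.sp i →ₗ[K] Y.sp i) : Prop :=
  ∀ (a : A) (x : X.sp (t a)), f (h a) (X.map a x) = Y.map a (f (t a) x)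

/-- Vanishing of all morphisms. -/
def H0 (X Y : QuivRep K V A t h) : Prop :=
  ∀ f : ∀ i, X.sp i →ₗ[K] Y.sp i, IsHom X Y f → ∀ i x, f i x = 0

/-- Vanishing of `Ext`, pointwise. -/
def E0 (X Y : QuivRep K V A t h) : Prop :=
  ∀ ψ : ∀ a, X.sp (t a) →ₗ[K] Y.sp (h a), ∃ φ : ∀ i, X.sp i →ₗ[K] Y.sp i,
    ∀ a x, φ (h a) (X.map a x) - Y.map a (φ (t a) x) = ψ a x

/-- A subrepresentation as a representation. -/
abbrev subRep {X : QuivRep K V A t h} (U : QuivRep.Sub X) : QuivRep K V A t h where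
  sp i := U.sub i
  map a := (X.map a).restrict (U.le a)

/-- The quotient by a subrepresentation. -/
abbrev quotRep {X : QuivRep K V A t h} (U : QuivRep.Sub X) : QuivRep K V A t h where
  sp i := X.sp i ⧸ U.sub i
  map a := Submodule.mapQ _ _ (X.map a) (fun x hx => U.le a x hx)

/-- Image of a morphism. -/
def imSub {X Y : QuivRep K V A t h} (f : ∀ i, X.sp i →ₗ[K] Y.sp i) (hf : IsHom X Y f) :
    QuivRep.Sub Y where
  sub i := LinearMap.range (f i)
  le := by
    rintro a _ ⟨x, rfl⟩
    exact ⟨X.map a x, hf a x⟩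

/-- Kernel of a morphism. -/
def kerSub {X Y : QuivRep K V A t h} (f : ∀ i, X.sp i →ₗ[K] Y.sp i) (hf : IsHom X Y f) :
    QuivRep.Sub X where
  sub i := LinearMap.ker (f i)
  le := by
    intro a x hx
    rw [LinearMap.mem_ker] at hx ⊢
    rw [hf a x, hx, map_zero]

/-- Trace of `X` in `Y`. -/
def trSub (X Y : QuivRep K V A t h) : QuivRep.Sub Y where
  sub i := ⨆ f : {f : ∀ i, X.sp i →ₗ[K] Y.sp i // IsHom X Y f}, LinearMap.range (f.1 i)
  le := by
    intro a x hx
    have : (⨆ f : {f : ∀ i, X.sp i →ₗ[K] Y.sp i // IsHom X Y f}, LinearMap.range (f.1 (t a))) ≤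
      (⨆ f : {f : ∀ i, X.sp i →ₗ[K] Y.sp i // IsHom X Y f},
        LinearMap.range (f.1 (h a))).comap (Y.map a) := by
      refine iSup_le fun f => ?_
      rintro _ ⟨x, rfl⟩
      rw [Submodule.mem_comap, ← f.2 a x]
      exact Submodule.mem_iSup_of_mem f (LinearMap.mem_range_self _ _)
    exact this hx

theorem mem_trSub {X Y : QuivRep K V A t h} (f : ∀ i, X.sp i →ₗ[K] Y.sp i)
    (hf : IsHom X Y f) (i : V) (x : X.sp i) : f i x ∈ (trSub X Y).sub i :=
  Submodule.mem_iSup_of_mem (ι := {f : ∀ i, X.sp i →ₗ[K] Y.sp i // IsHom X Y f})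
    ⟨f, hf⟩ (LinearMap.mem_range_self (f i) x)

theorem exists_lift {M N P : Type} [AddCommGroup M] [Module K M] [AddCommGroup N] [Module K N]
    [AddCommGroup P] [Module K P] (g : N →ₗ[K] P) (hg : Function.Surjective g)
    (f : M →ₗ[K] P) : ∃ f' : M →ₗ[K] N, ∀ x, g (f' x) = f x := by
  obtain ⟨s, hs⟩ := g.exists_rightInverse_of_surjective (LinearMap.range_eq_top.2 hg)
  exact ⟨s.comp f, fun x => LinearMap.congr_fun hs (f x)⟩

theorem exists_ext {M P : Type} [AddCommGroup M] [Module K M]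
    [AddCommGroup P] [Module K P] (S : Submodule K M)
    (f : S →ₗ[K] P) : ∃ f' : M →ₗ[K] P, ∀ x : S, f' x = f x := by
  obtain ⟨g, hg⟩ := f.exists_extend
  exact ⟨g, fun x => LinearMap.congr_fun hg x⟩

theorem exists_desc {M N P : Type} [AddCommGroup M] [Module K M] [AddCommGroup N] [Module K N]
    [AddCommGroup P] [Module K P] (g : M →ₗ[K] N) (hg : Function.Surjective g)
    (f : M →ₗ[K] P) (hf : ∀ x, g x = 0 → f x = 0) : ∃ f' : N →ₗ[K] P, ∀ x, f' (g x) = f x := by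
  obtain ⟨s, hs⟩ := g.exists_rightInverse_of_surjective (LinearMap.range_eq_top.2 hg)
  refine ⟨f.comp s, fun x => ?_⟩
  have h1 : g (s (g x) - x) = 0 := by
    rw [map_sub, sub_eq_zero]; exact LinearMap.congr_fun hs (g x)
  have := hf _ h1
  rw [map_sub, sub_eq_zero] at this
  exact this

/-- `Ext(X,-)` preserves quotients of finite direct powers. -/
theorem E0_of_jointly_surj {X Y Z : QuivRep K V A t h} {ι : Type} [Fintype ι]
    (f : ι → ∀ i, Y.sp i →ₗ[K] Z.sp i) (hf : ∀ k, IsHom Y Z (f k))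
    (hs : ∀ i (z : Z.sp i), ∃ y : ι → Y.sp i, ∑ k, f k i (y k) = z)
    (hE : E0 X Y) : E0 X Z := by
  classical
  intro ψ
  have key : ∀ a, ∃ ψ' : ι → (X.sp (t a) →ₗ[K] Y.sp (h a)), ∀ x, ∑ k, f k (h a) (ψ' k x) = ψ a x := by
    intro a
    obtain ⟨g, hg⟩ := exists_lift (K := K) (M := X.sp (t a)) (N := ι → Y.sp (h a))
      (∑ k, (f k (h a)).comp (LinearMap.proj k)) (by
        intro z
        obtain ⟨y, hy⟩ := hs _ z
        exact ⟨y, by simpa using hy⟩) (ψ a)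
    exact ⟨fun k => (LinearMap.proj k).comp g, fun x => by simpa using hg x⟩
  choose ψ' hψ' using key
  have : ∀ k, ∃ φ : ∀ i, X.sp i →ₗ[K] Y.sp i,
    ∀ a x, φ (h a) (X.map a x) - Y.map a (φ (t a) x) = ψ' a k x := fun k => hE (fun a => ψ' a k)
  choose φ hφ using this
  refine ⟨fun i => ∑ k, (f k i).comp (φ k i), fun a x => ?_⟩
  rw [← hψ']
  simp only [LinearMap.sum_apply, LinearMap.comp_apply, map_sum]
  rw [← Finset.sum_sub_distrib]
  refine Finset.sum_congr rfl fun k _ => ?_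
  rw [← hφ, map_sub, hf k]

theorem E0_of_surj {X Y Z : QuivRep K V A t h}
    (f : ∀ i, Y.sp i →ₗ[K] Z.sp i) (hf : IsHom Y Z f)
    (hs : ∀ i, Function.Surjective (f i)) (hE : E0 X Y) : E0 X Z := by
  refine E0_of_jointly_surj (ι := Unit) (fun _ => f) (fun _ => hf) (fun i z => ?_) hE
  obtain ⟨y, hy⟩ := hs i z
  exact ⟨fun _ => y, by simpa using hy⟩

/-- A surjection `X → Y` such that almost-morphisms vanish on the kernel. -/
theorem E0_of_quot {X Y Z : QuivRep K V A t h}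
    (f : ∀ i, X.sp i →ₗ[K] Y.sp i) (hf : IsHom X Y f)
    (hs : ∀ i, Function.Surjective (f i)) (hE : E0 X Z)
    (hk : ∀ φ : ∀ i, X.sp i →ₗ[K] Z.sp i,
      (∀ a (x : X.sp (t a)), f (t a) x = 0 → φ (h a) (X.map a x) = Z.map a (φ (t a) x)) →
      ∀ i x, f i x = 0 → φ i x = 0) : E0 Y Z := by
  intro ψ
  obtain ⟨φ, hφ⟩ := hE (fun a => (ψ a).comp (f (t a)))
  have h0 := hk φ (fun a x hx => by
    rw [← sub_eq_zero, hφ]; simp [hx])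
  choose φ' hφ' using fun i => exists_desc (f i) (hs i) (φ i) (h0 i)
  refine ⟨φ', fun a y => ?_⟩
  obtain ⟨x, rfl⟩ := hs _ y
  rw [← hf, hφ', hφ', hφ]
  rfl

theorem E0_trSub [Finite V] {X Y : QuivRep K V A t h} (hX : E0 X X) : E0 X (subRep (trSub X Y)) := by
  classical
  cases nonempty_fintype V
  let H : Submodule K (∀ i, X.sp i →ₗ[K] Y.sp i) := QuivRep.homS X Y
  have hH : ∀ f, f ∈ H ↔ IsHom X Y f := by
    intro f
    exact ⟨fun hf a x => LinearMap.congr_fun (hf a) x, fun hf a => LinearMap.ext (hf a)⟩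
  let b := Module.finBasis K H
  let f : Fin (Module.finrank K H) → ∀ i, X.sp i →ₗ[K] (subRep (trSub X Y)).sp i :=
    fun k i => ((b k).1 i).codRestrict _ (fun x => mem_trSub _ ((hH _).1 (b k).2) i x)
  refine E0_of_jointly_surj f ?_ ?_ hX
  · intro k a x
    apply Subtype.ext
    exact (hH _).1 (b k).2 a x
  · intro i z
    have hz : (z.1 : Y.sp i) ∈ LinearMap.range
        (∑ k, ((b k).1 i).comp (LinearMap.proj k) : (Fin (Module.finrank K H) → X.sp i) →ₗ[K] Y.sp i) := by
      have hle : (trSub X Y).sub i ≤ LinearMap.range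
        (∑ k, ((b k).1 i).comp (LinearMap.proj k) : (Fin (Module.finrank K H) → X.sp i) →ₗ[K] Y.sp i) := by
        refine iSup_le ?_
        rintro ⟨g, hg⟩ _ ⟨x, rfl⟩
        refine ⟨fun k => b.repr ⟨g, (hH g).2 hg⟩ k • x, ?_⟩
        have h1 := b.sum_repr ⟨g, (hH g).2 hg⟩
        have h2 := congrArg (fun u : ∀ i, X.sp i →ₗ[K] Y.sp i => u i x) (congrArg Subtype.val h1)
        simp only [LinearMap.sum_apply, LinearMap.comp_apply, LinearMap.proj_apply, map_smul]
        simp only [Submodule.coe_sum, Submodule.coe_smul, Finset.sum_apply, LinearMap.sum_apply,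
          Pi.smul_apply, LinearMap.smul_apply] at h2
        exact h2
      exact hle z.2
    obtain ⟨y, hy⟩ := hz
    refine ⟨y, Subtype.ext ?_⟩
    rw [← hy]
    simp [f, subRep]

theorem H0_quot_trSub [Finite V] {X Y : QuivRep K V A t h} (hX : E0 X X) :
    H0 X (quotRep (trSub X Y)) := by
  intro f hf
  choose g hg using fun i => exists_lift ((trSub X Y).sub i).mkQ
    (Submodule.mkQ_surjective _) (f i)
  have hmem : ∀ a x, g (h a) (X.map a x) - Y.map a (g (t a) x) ∈ (trSub X Y).sub (h a) := by
    intro a x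
    rw [← Submodule.Quotient.mk_eq_zero]
    have h1 := hf a x
    rw [← hg, ← hg] at h1
    have h2 : (quotRep (trSub X Y)).map a (((trSub X Y).sub (t a)).mkQ (g (t a) x)) =
      ((trSub X Y).sub (h a)).mkQ (Y.map a (g (t a) x)) := rfl
    rw [h2, ← sub_eq_zero, ← map_sub] at h1
    exact h1
  obtain ⟨φ, hφ⟩ := E0_trSub (Y := Y) hX (fun a =>
    ((g (h a)).comp (X.map a) - (Y.map a).comp (g (t a))).codRestrict _ (hmem a))
  have hh : IsHom X Y (fun i => g i - ((trSub X Y).sub i).subtype.comp (φ i)) := by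
    intro a x
    have h1 := congrArg Subtype.val (hφ a x)
    have h2 : (φ (h a) (X.map a x)).1 - Y.map a (φ (t a) x).1 =
      g (h a) (X.map a x) - Y.map a (g (t a) x) := h1
    simp only [LinearMap.sub_apply, LinearMap.comp_apply, Submodule.subtype_apply, map_sub]
    rw [sub_eq_sub_iff_sub_eq_sub, ← h2]
  intro i x
  rw [← hg]
  have h3 := mem_trSub _ hh i x
  have h4 : g i x ∈ (trSub X Y).sub i := by
    have := Submodule.add_mem _ h3 (φ i x).2
    simpa using this
  exact (Submodule.Quotient.mk_eq_zero _).2 h4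

/-- In the right perpendicular category. -/
def Perp (X Y : QuivRep K V A t h) : Prop := H0 X Y ∧ E0 X Y

/-- Relatively projective objects of the perpendicular category. -/
def RelProj (X P : QuivRep K V A t h) : Prop :=
  Perp X P ∧ ∀ Z, Perp X Z → E0 P Z

/-- Existence of a nonzero morphism. -/
def NZ (X Y : QuivRep K V A t h) : Prop :=
  ∃ f : ∀ i, X.sp i →ₗ[K] Y.sp i, IsHom X Y f ∧ ∃ i x, f i x ≠ 0

/-- Universal-type extension of `X^ι` by `P`. -/
abbrev extRep {X P : QuivRep K V A t h} {ι : Type} [Fintype ι]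
    (η : ι → ∀ a, X.sp (t a) →ₗ[K] P.sp (h a)) : QuivRep K V A t h where
  sp i := P.sp i × (ι → X.sp i)
  map a := LinearMap.prod
    ((P.map a).comp (LinearMap.fst K _ _) +
      ∑ k, ((η k a).comp (LinearMap.proj k)).comp (LinearMap.snd K _ _))
    (LinearMap.pi fun k => ((X.map a).comp (LinearMap.proj k)).comp (LinearMap.snd K _ _))

theorem extRep_map {X P : QuivRep K V A t h} {ι : Type} [Fintype ι]
    (η : ι → ∀ a, X.sp (t a) →ₗ[K] P.sp (h a)) (a : A) (p : P.sp (t a)) (v : ι → X.sp (t a)) :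
    (extRep η).map a (p, v) = (P.map a p + ∑ k, η k a (v k), fun k => X.map a (v k)) := by
  refine Prod.ext ?_ ?_
  · simp [extRep]
  · funext k; simp [extRep]

/-- The key solvability statement for maps out of `extRep`. -/
theorem extRep_solve {X P Z : QuivRep K V A t h} {ι : Type} [Fintype ι]
    (η : ι → ∀ a, X.sp (t a) →ₗ[K] P.sp (h a)) (hXZ : E0 X Z)
    (φ : ∀ i, P.sp i →ₗ[K] Z.sp i) (ψ : ∀ a, (extRep η).sp (t a) →ₗ[K] Z.sp (h a))
    (hφ : ∀ a x, φ (h a) (P.map a x) - Z.map a (φ (t a) x) = ψ a (x, 0)) :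
    ∃ φ' : ∀ i, (extRep η).sp i →ₗ[K] Z.sp i, (∀ i x, φ' i (x, 0) = φ i x) ∧
      ∀ a x, φ' (h a) ((extRep η).map a x) - Z.map a (φ' (t a) x) = ψ a x := by
  classical
  have : ∀ k, ∃ θ : ∀ i, X.sp i →ₗ[K] Z.sp i, ∀ a x,
      θ (h a) (X.map a x) - Z.map a (θ (t a) x) = ψ a (0, Pi.single k x) - φ (h a) (η k a x) := by
    intro k
    exact hXZ (fun a => (ψ a).comp ((LinearMap.inr K (P.sp (t a)) (ι → X.sp (t a))).comp
      (LinearMap.single K (fun _ => X.sp (t a)) k)) - (φ (h a)).comp (η k a))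
  choose θ hθ using this
  refine ⟨fun i => LinearMap.coprod (φ i) (∑ k, (θ k i).comp (LinearMap.proj k)), ?_, ?_⟩
  · intro i x
    refine (LinearMap.coprod_apply _ _ _).trans ?_
    simp
  · rintro a ⟨p, v⟩
    rw [extRep_map]
    have e1 : ∀ i (p : P.sp i) (v : ι → X.sp i),
      (LinearMap.coprod (φ i) (∑ k, (θ k i).comp (LinearMap.proj k)) :
        (P.sp i × (ι → X.sp i)) →ₗ[K] Z.sp i) (p, v) = φ i p + ∑ k, θ k i (v k) := by
      intro i p v
      simp
    have e2 : ψ a (p, v) = ψ a (p, 0) + ∑ k, ψ a (0, Pi.single k (v k)) := by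
      rw [← map_sum, ← map_add]
      congr 1
      refine Prod.ext ?_ ?_
      · rw [Prod.fst_add, Prod.fst_sum]; simp
      · rw [Prod.snd_add, Prod.snd_sum]
        simp [Finset.univ_sum_single]
    refine Eq.trans (congrArg₂ (· - ·) (e1 _ _ _) (congrArg (Z.map a) (e1 _ _ _))) ?_
    rw [e2, ← hφ]
    have e3 : ∀ k, ψ a (0, Pi.single k (v k)) =
      θ k (h a) (X.map a (v k)) - Z.map a (θ k (t a) (v k)) + φ (h a) (η k a (v k)) := by
      intro k; rw [hθ]; abel
    simp only [e3, map_add, map_sum, Finset.sum_add_distrib, Finset.sum_sub_distrib]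
    abel

theorem E0_extRep {X P : QuivRep K V A t h} {ι : Type} [Fintype ι]
    (η : ι → ∀ a, X.sp (t a) →ₗ[K] P.sp (h a)) (hX : E0 X X)
    (hη : ∀ ρ : ∀ a, X.sp (t a) →ₗ[K] P.sp (h a), ∃ c : ι → K, ∑ k, c k • η k = ρ) :
    E0 X (extRep η) := by
  intro ψ
  have : ∀ k, ∃ φ : ∀ i, X.sp i →ₗ[K] X.sp i, ∀ a x,
      φ (h a) (X.map a x) - X.map a (φ (t a) x) = (ψ a x).2 k := by
    intro k
    exact hX (fun a => ((LinearMap.proj k).comp (LinearMap.snd K (P.sp (h a)) (ι → X.sp (h a)))).comp (ψ a))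
  choose φ hφ using this
  obtain ⟨c, hc⟩ := hη (fun a => (LinearMap.fst K (P.sp (h a)) (ι → X.sp (h a))).comp (ψ a) +
    ∑ k, (η k a).comp (φ k (t a)))
  refine ⟨fun i => LinearMap.prod (0 : X.sp i →ₗ[K] P.sp i)
    (LinearMap.pi fun k => φ k i - c k • LinearMap.id), fun a x => ?_⟩
  have e1 : ∀ i (x : X.sp i), (LinearMap.prod (0 : X.sp i →ₗ[K] P.sp i)
    (LinearMap.pi fun k => φ k i - c k • LinearMap.id)) x = (0, fun k => φ k i x - c k • x) := by
    intro i x; rfl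
  refine Eq.trans (congrArg₂ (· - ·) (e1 _ _)
    ((congrArg ((extRep η).map a) (e1 _ _)).trans (extRep_map _ _ _ _))) ?_
  have hc' := LinearMap.congr_fun (congrFun hc a) x
  have hc2 : ∑ k, c k • η k a x = (ψ a x).1 + ∑ k, η k a (φ k (t a) x) := by
    simpa [Finset.sum_apply] using hc'
  refine Prod.ext ?_ ?_
  · change (0 : P.sp (h a)) - (P.map a 0 + ∑ k, η k a (φ k (t a) x - c k • x)) = (ψ a x).1
    simp only [map_sub, map_smul, map_zero, Finset.sum_sub_distrib, hc2]
    abel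
  · funext k
    change (φ k (h a) (X.map a x) - c k • X.map a x) - X.map a (φ k (t a) x - c k • x) = (ψ a x).2 k
    rw [← hφ, map_sub, map_smul]
    abel

theorem relProj_exists [Finite V] [Finite A] {X P Y : QuivRep K V A t h} (hX : E0 X X)
    (hP : ∀ Z, E0 P Z) (hY : Perp X Y) (hPY : NZ P Y) :
    ∃ P', RelProj X P' ∧ NZ P' Y := by
  classical
  cases nonempty_fintype V
  cases nonempty_fintype A
  let b := Module.finBasis K (∀ a, X.sp (t a) →ₗ[K] P.sp (h a))
  let P1 := extRep (fun k => b k)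
  have hXP1 : E0 X P1 := E0_extRep _ hX (fun ρ => ⟨fun k => b.repr ρ k, b.sum_repr ρ⟩)
  have hP1 : ∀ Z, Perp X Z → E0 P1 Z := by
    intro Z hZ ψ
    obtain ⟨φ, hφ⟩ := hP Z (fun a => (ψ a).comp (LinearMap.inl K (P.sp (t a)) (_ → X.sp (t a))))
    obtain ⟨φ', -, h2⟩ := extRep_solve (fun k => b k) hZ.2 φ ψ hφ
    exact ⟨φ', h2⟩
  obtain ⟨g, hg, i0, x0, hgx⟩ := hPY
  obtain ⟨g1, hg1, hg1'⟩ := extRep_solve (fun k => b k) hY.2 g 0 (fun a x => by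
    rw [hg, sub_self]; rfl)
  have hg1h : IsHom P1 Y g1 := fun a x => sub_eq_zero.1 (hg1' a x)
  let T := trSub X P1
  -- things vanish on the trace
  have hvan : ∀ Z, Perp X Z → ∀ φ : ∀ i, P1.sp i →ₗ[K] Z.sp i,
      (∀ a (x : P1.sp (t a)), x ∈ T.sub (t a) → φ (h a) (P1.map a x) = Z.map a (φ (t a) x)) →
      ∀ i x, x ∈ T.sub i → φ i x = 0 := by
    intro Z hZ φ hφ i x hx
    have : T.sub i ≤ LinearMap.ker (φ i) := by
      refine iSup_le ?_
      rintro ⟨f, hf⟩ _ ⟨y, rfl⟩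
      have := hZ.1 (fun i => (φ i).comp (f i)) (fun a x => by
        simp only [LinearMap.comp_apply]
        rw [hf, hφ _ _ (mem_trSub f hf _ _)])
      exact this i y
    exact this hx
  have hq : IsHom P1 (quotRep T) (fun i => (T.sub i).mkQ) := fun a x => rfl
  have hqs : ∀ i, Function.Surjective (T.sub i).mkQ := fun i => Submodule.mkQ_surjective _
  have hq0 : ∀ i x, (T.sub i).mkQ x = 0 → x ∈ T.sub i := fun i x hx =>
    (Submodule.Quotient.mk_eq_zero _).1 hx
  refine ⟨quotRep T, ⟨⟨H0_quot_trSub hX, E0_of_surj _ hq hqs hXP1⟩, ?_⟩, ?_⟩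
  · intro Z hZ
    refine E0_of_quot _ hq hqs (hP1 Z hZ) ?_
    intro φ hφ i x hx
    exact hvan Z hZ φ (fun a x hx => hφ a x ((Submodule.Quotient.mk_eq_zero _).2 hx)) i x (hq0 i x hx)
  · have hg0 := hvan Y hY g1 (fun a x _ => hg1h a x)
    choose g2 hg2 using fun i => exists_desc (T.sub i).mkQ (hqs i) (g1 i)
      (fun x hx => hg0 i x (hq0 i x hx))
    refine ⟨g2, ?_, i0, (T.sub i0).mkQ (x0, 0), ?_⟩
    · intro a y
      obtain ⟨x, rfl⟩ := hqs _ y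
      exact ((hg2 _ _).trans (hg1h a x)).trans (congrArg (Y.map a) (hg2 _ _).symm)
    · rw [hg2, hg1]
      exact hgx

theorem E0_kernel {X P Y : QuivRep K V A t h} (f : ∀ i, P.sp i →ₗ[K] Y.sp i) (hf : IsHom P Y f)
    (hXP : E0 X P) (hXY : H0 X Y) : E0 X (subRep (kerSub f hf)) := by
  intro ψ
  obtain ⟨φ, hφ⟩ := hXP (fun a => ((kerSub f hf).sub (h a)).subtype.comp (ψ a))
  have h1 := hXY (fun i => (f i).comp (φ i)) (fun a x => by
    have h2 : f (h a) (ψ a x).1 = 0 := (ψ a x).2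
    have h3 := congrArg (f (h a)) (hφ a x)
    rw [map_sub, hf] at h3
    exact sub_eq_zero.1 (h3.trans h2))
  refine ⟨fun i => (φ i).codRestrict _ (fun x => h1 i x), fun a x => Subtype.ext ?_⟩
  exact hφ a x

theorem relProj_kernel {X P Y : QuivRep K V A t h} (f : ∀ i, P.sp i →ₗ[K] Y.sp i)
    (hf : IsHom P Y f) (hP : RelProj X P) (hXY : H0 X Y) :
    RelProj X (subRep (kerSub f hf)) := by
  refine ⟨⟨?_, E0_kernel f hf hP.1.2 hXY⟩, ?_⟩
  · intro g hg i x
    have := hP.1.1 (fun i => ((kerSub f hf).sub i).subtype.comp (g i))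
      (fun a x => congrArg Subtype.val (hg a x)) i x
    exact Subtype.ext this
  · intro Z hZ ψ
    choose ψ' hψ' using fun a => exists_ext ((kerSub f hf).sub (t a)) (ψ a)
    obtain ⟨φ, hφ⟩ := hP.2 Z hZ ψ'
    exact ⟨fun i => (φ i).comp ((kerSub f hf).sub i).subtype,
      fun a x => (hφ a x.1).trans (hψ' a x)⟩

theorem nz_kernel {X P Y Z : QuivRep K V A t h} (f : ∀ i, P.sp i →ₗ[K] Y.sp i)
    (hf : IsHom P Y f) (hs : ∀ i, Function.Surjective (f i)) (hP : RelProj X P)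
    (hZ : Perp X Z) (hYZ : ¬ E0 Y Z) : NZ (subRep (kerSub f hf)) Z := by
  by_contra hnz
  apply hYZ
  refine E0_of_quot f hf hs (hP.2 Z hZ) ?_
  intro φ hφ i x hx
  by_contra hne
  exact hnz ⟨fun i => (φ i).comp ((kerSub f hf).sub i).subtype,
    fun a x => hφ a x.1 x.2, i, ⟨x, hx⟩, hne⟩

/-- Paths starting at `v`. -/
inductive Pth (t h : A → V) (v : V) : V → Type
  | nil : Pth t h v v
  | snoc (a : A) (p : Pth t h v (t a)) : Pth t h v (h a)

theorem isPathFrom_snoc (t h : A → V) (p : List A) (a : A) : ∀ i, IsPathFrom t h i p (t a) →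
    IsPathFrom t h i (p ++ [a]) (h a) := by
  induction p with
  | nil => intro i hi; exact ⟨hi.symm, rfl⟩
  | cons b p ih => intro i hi; exact ⟨hi.1, ih _ hi.2⟩

/-- The adjacency relation. -/
def adj (t h : A → V) (u v : V) : Prop := ∃ a, t a = u ∧ h a = v

theorem transGen_path {u v : V} (huv : Relation.TransGen (adj t h) u v) :
    ∃ p, p ≠ [] ∧ IsPathFrom t h u p v := by
  induction huv with
  | single hab =>
    obtain ⟨a, rfl, rfl⟩ := hab
    exact ⟨[a], by simp, rfl, rfl⟩
  | tail _ hab ih =>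
    obtain ⟨a, rfl, rfl⟩ := hab
    obtain ⟨p, hp, hp'⟩ := ih
    exact ⟨p ++ [a], by simp, isPathFrom_snoc t h p a _ hp'⟩

/-- A convenient form of acyclicity. -/
def Acy (t h : A → V) : Prop := ∀ v, ¬ Relation.TransGen (adj t h) v v

theorem acy_of_acyclic (hQ : Acyclic t h) : Acy t h := by
  intro v hv
  obtain ⟨p, hp, hp'⟩ := transGen_path hv
  exact hp (hQ v p hp')

theorem acy_swap (hQ : Acy t h) : Acy h t := by
  intro v hv
  apply hQ v
  rw [← Relation.transGen_swap]
  have hle : ∀ x y, adj h t x y → Function.swap (adj t h) x y := by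
    rintro x y ⟨a, h1, h2⟩
    exact ⟨a, h2, h1⟩
  exact Relation.TransGen.mono hle _ _ hv

theorem finite_pth [Finite V] [Finite A] (hQ : Acy t h) (v j : V) : Finite (Pth t h v j) := by
  have : IsTrans V (Relation.TransGen (adj t h)) := ⟨fun _ _ _ => Relation.TransGen.trans⟩
  have : Std.Irrefl (Relation.TransGen (adj t h)) := ⟨hQ⟩
  have wf := Finite.wellFounded_of_trans_of_irrefl (Relation.TransGen (adj t h))
  induction j using wf.induction with
  | h j ih =>
    have : ∀ a : {a : A // h a = j}, Finite (Pth t h v (t a.1)) := fun a =>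
      ih _ (Relation.TransGen.single ⟨a.1, rfl, a.2⟩)
    let F : (PLift (v = j) ⊕ (Σ a : {a : A // h a = j}, Pth t h v (t a.1))) → Pth t h v j := fun s =>
      match s with
      | Sum.inl e => e.down ▸ Pth.nil
      | Sum.inr ⟨a, p⟩ => a.2 ▸ Pth.snoc a.1 p
    refine Finite.of_surjective F ?_
    intro p
    cases p with
    | nil => exact ⟨Sum.inl ⟨rfl⟩, rfl⟩
    | snoc a p => exact ⟨Sum.inr ⟨⟨a, rfl⟩, p⟩, rfl⟩

/-- The projective representation at `v`. -/
abbrev projRep (K : Type) [Field K] (t h : A → V) (v : V) [∀ j, Finite (Pth t h v j)] :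
    QuivRep K V A t h where
  sp j := Pth t h v j →₀ K
  map a := Finsupp.lmapDomain K K (Pth.snoc a)

/-- Recursive evaluation along paths. -/
def pval (X : QuivRep K V A t h) (v : V) (x0 : X.sp v)
    (ψ : ∀ a, Pth t h v (t a) → X.sp (h a)) : ∀ j, Pth t h v j → X.sp j
  | _, Pth.nil => x0
  | _, Pth.snoc a p => X.map a (pval X v x0 ψ (t a) p) + ψ a p

theorem projRep_solve (v : V) [∀ j, Finite (Pth t h v j)] (X : QuivRep K V A t h) (x0 : X.sp v)
    (ψ : ∀ a, (projRep K t h v).sp (t a) →ₗ[K] X.sp (h a)) :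
    ∃ φ : ∀ i, (projRep K t h v).sp i →ₗ[K] X.sp i,
      φ v (Finsupp.single Pth.nil 1) = x0 ∧
      ∀ a x, φ (h a) ((projRep K t h v).map a x) - X.map a (φ (t a) x) = ψ a x := by
  let φ : ∀ i, (Pth t h v i →₀ K) →ₗ[K] X.sp i := fun i => Finsupp.linearCombination K
    (pval X v x0 (fun a p => ψ a (Finsupp.single p 1)) i)
  refine ⟨φ, ?_, ?_⟩
  · simp [φ, pval]
  · intro a x
    have : (φ (h a)).comp (Finsupp.lmapDomain K K (Pth.snoc a)) - (X.map a).comp (φ (t a)) = ψ a := by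
      refine Finsupp.lhom_ext' fun p => LinearMap.ext_ring ?_
      simp [φ, pval]
    exact LinearMap.congr_fun this x

theorem proj_exists [Finite V] [Finite A] (hQ : Acy t h) (Y : QuivRep K V A t h) (v : V) (y : Y.sp v)
    (hy : y ≠ 0) : ∃ P : QuivRep K V A t h, (∀ Z, E0 P Z) ∧ NZ P Y := by
  have : ∀ j, Finite (Pth t h v j) := finite_pth hQ v
  refine ⟨projRep K t h v, fun Z ψ => ?_, ?_⟩
  · obtain ⟨φ, -, hφ⟩ := projRep_solve v Z 0 ψ
    exact ⟨φ, hφ⟩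
  · obtain ⟨φ, h1, hφ⟩ := projRep_solve v Y y 0
    exact ⟨φ, fun a x => sub_eq_zero.1 (hφ a x), v, _, by rw [h1]; exact hy⟩

end basics

section numerics

set_option linter.unusedSectionVars false

variable {K : Type} [Field K] {V A : Type} [Fintype V] [DecidableEq V] [Fintype A] {t h : A → V}

theorem mem_homS_iff (X Y : QuivRep K V A t h) (f : ∀ i, X.sp i →ₗ[K] Y.sp i) :
    f ∈ QuivRep.homS X Y ↔ IsHom X Y f :=
  ⟨fun hf a x => LinearMap.congr_fun (hf a) x, fun hf a => LinearMap.ext (hf a)⟩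

theorem ker_dmap (X Y : QuivRep K V A t h) :
    LinearMap.ker (QuivRep.dmap X Y) = QuivRep.homS X Y := by
  ext f
  rw [LinearMap.mem_ker, mem_homS_iff]
  constructor
  · intro hf a x
    exact sub_eq_zero.1 (LinearMap.congr_fun (congrFun hf a) x)
  · intro hf
    funext a
    exact LinearMap.ext fun x => sub_eq_zero.2 (hf a x)

theorem extDim_eq_zero_iff (X Y : QuivRep K V A t h) : QuivRep.extDim X Y = 0 ↔ E0 X Y := by
  unfold QuivRep.extDim
  rw [Module.finrank_zero_iff, Submodule.Quotient.subsingleton_iff, LinearMap.range_eq_top]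
  constructor
  · intro hs ψ
    obtain ⟨φ, hφ⟩ := hs ψ
    exact ⟨φ, fun a x => LinearMap.congr_fun (congrFun hφ a) x⟩
  · intro hE ψ
    obtain ⟨φ, hφ⟩ := hE ψ
    exact ⟨φ, funext fun a => LinearMap.ext (hφ a)⟩

theorem homDim_eq_zero_iff (X Y : QuivRep K V A t h) : QuivRep.homDim X Y = 0 ↔ H0 X Y := by
  unfold QuivRep.homDim
  rw [Submodule.finrank_eq_zero, Submodule.eq_bot_iff]
  constructor
  · intro hs f hf i x
    rw [hs f ((mem_homS_iff _ _ _).2 hf)]; rfl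
  · intro hH f hf
    funext i
    exact LinearMap.ext (hH f ((mem_homS_iff _ _ _).1 hf) i)

theorem euler_eq (X Y : QuivRep K V A t h) :
    eulerForm t h (natZ X.dimVec) (natZ Y.dimVec) =
      (QuivRep.homDim X Y : ℤ) - (QuivRep.extDim X Y : ℤ) := by
  have h1 := (QuivRep.dmap X Y).finrank_range_add_finrank_ker
  have h2 := Submodule.finrank_quotient_add_finrank (LinearMap.range (QuivRep.dmap X Y))
  rw [ker_dmap] at h1
  rw [Module.finrank_pi_fintype] at h1 h2
  simp only [Module.finrank_linearMap] at h1 h2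
  unfold eulerForm natZ QuivRep.dimVec QuivRep.homDim QuivRep.extDim
  zify at h1 h2
  linarith

theorem weightL_pair (α : V → ℤ) (β : V → ℕ) :
    ∑ i, weightL t h α i * (β i : ℤ) = eulerForm t h α (natZ β) := by
  unfold weightL eulerForm natZ
  simp only [sub_mul, Finset.sum_sub_distrib, Finset.sum_mul]
  congr 1
  · simp
  · rw [Finset.sum_comm]
    simp [mul_assoc]

theorem weight_swap (α : V → ℤ) (i : V) : weightL h t α i = - weightR t h α i := by
  unfold weightL weightR eulerForm
  simp [mul_comm]

theorem dimVec_subRep {X : QuivRep K V A t h} (U : QuivRep.Sub X) :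
    (subRep U).dimVec = U.dimVec := rfl

theorem dimVec_ne_zero {X : QuivRep K V A t h} (i : V) (x : X.sp i) (hx : x ≠ 0) :
    X.dimVec ≠ fun _ => 0 := by
  intro h0
  have h1 : Module.finrank K (X.sp i) = 0 := congrFun h0 i
  rw [Module.finrank_zero_iff] at h1
  exact hx (Subsingleton.elim _ _)

theorem exists_ne_zero {X : QuivRep K V A t h} (hX : X.dimVec ≠ fun _ => 0) :
    ∃ i, ∃ x : X.sp i, x ≠ 0 := by
  by_contra hc
  push Not at hc
  apply hX
  funext i
  have : Subsingleton (X.sp i) := ⟨fun x y => by rw [hc i x, hc i y]⟩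
  exact Module.finrank_zero_of_subsingleton

theorem sub_eq_top {X : QuivRep K V A t h} (U : QuivRep.Sub X) (hU : U.dimVec = X.dimVec) (i : V) :
    U.sub i = ⊤ := Submodule.eq_top_of_finrank_eq (congrFun hU i)

theorem stable_perp {X Y : QuivRep K V A t h} (hX : E0 X X)
    (hY : IsStable K (weightL t h (natZ X.dimVec)) Y) : Perp X Y := by
  obtain ⟨h0, -, hst⟩ := hY
  rw [weightL_pair, euler_eq] at h0
  have hH : H0 X Y := by
    by_contra hH
    have hne : ∃ f : ∀ i, X.sp i →ₗ[K] Y.sp i, IsHom X Y f ∧ ∃ i x, f i x ≠ 0 := by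
      unfold H0 at hH
      push Not at hH
      exact hH
    obtain ⟨f, hf, i, x, hx⟩ := hne
    have hE := E0_trSub (Y := Y) hX
    by_cases htop : (trSub X Y).dimVec = Y.dimVec
    · have hXY : E0 X Y := by
        refine E0_of_surj (Y := subRep (trSub X Y)) (fun i => ((trSub X Y).sub i).subtype)
          (fun a x => rfl) (fun i y => ?_) hE
        exact ⟨⟨y, by rw [sub_eq_top _ htop]; trivial⟩, rfl⟩
      have h1 := (extDim_eq_zero_iff X Y).2 hXY
      rw [h1] at h0
      exact hH ((homDim_eq_zero_iff X Y).1 (by simpa using h0))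
    · have hnz : (trSub X Y).dimVec ≠ fun _ => 0 := by
        rw [← dimVec_subRep]
        exact dimVec_ne_zero (X := subRep (trSub X Y)) i ⟨f i x, mem_trSub f hf i x⟩
          (fun h => hx (congrArg Subtype.val h))
      have h1 := hst _ hnz htop
      rw [weightL_pair, ← dimVec_subRep, euler_eq, (extDim_eq_zero_iff _ _).2 hE] at h1
      simp at h1
      omega
  refine ⟨hH, ?_⟩
  rw [← extDim_eq_zero_iff]
  rw [(homDim_eq_zero_iff X Y).2 hH] at h0
  simpa using h0

theorem stable_surj {X P Y : QuivRep K V A t h}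
    (hY : IsStable K (weightL t h (natZ X.dimVec)) Y) (hP : E0 X P)
    (f : ∀ i, P.sp i →ₗ[K] Y.sp i) (hf : IsHom P Y f) (hne : ∃ i x, f i x ≠ 0) :
    ∀ i, Function.Surjective (f i) := by
  obtain ⟨i, x, hx⟩ := hne
  have hE : E0 X (subRep (imSub f hf)) :=
    E0_of_surj (Z := subRep (imSub f hf)) (fun i => (f i).rangeRestrict)
      (fun a x => Subtype.ext (hf a x)) (fun i => (f i).surjective_rangeRestrict) hP
  by_cases htop : (imSub f hf).dimVec = Y.dimVec
  · intro i
    exact LinearMap.range_eq_top.1 (sub_eq_top _ htop i)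
  · exfalso
    have hnz : (imSub f hf).dimVec ≠ fun _ => 0 := by
      rw [← dimVec_subRep]
      exact dimVec_ne_zero (X := subRep (imSub f hf)) i ⟨f i x, x, rfl⟩
        (fun h => hx (congrArg Subtype.val h))
    have h1 := hY.2.2 _ hnz htop
    rw [weightL_pair, ← dimVec_subRep, euler_eq, (extDim_eq_zero_iff _ _).2 hE] at h1
    simp at h1
    omega

/-- Total dimension. -/
def totdim (X : QuivRep K V A t h) : ℕ := ∑ i, X.dimVec i

/-- The main ordering function. -/
theorem main_order (hQ : Acy t h) {X : QuivRep K V A t h} (hX : E0 X X) :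
    ∃ p : QuivRep K V A t h → ℕ, ∀ Y Z, IsStable K (weightL t h (natZ X.dimVec)) Y →
      IsStable K (weightL t h (natZ X.dimVec)) Z → ¬ E0 Y Z → p Z < p Y := by
  classical
  let S : QuivRep K V A t h → Set ℕ := fun Y => {n | ∃ P, RelProj X P ∧ NZ P Y ∧ totdim P = n}
  refine ⟨fun Y => sInf (S Y), fun Y Z hY hZ hYZ => ?_⟩
  have hYp := stable_perp hX hY
  have hZp := stable_perp hX hZ
  have hne : (S Y).Nonempty := by
    obtain ⟨i, y, hy⟩ := exists_ne_zero hY.2.1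
    obtain ⟨P, hP, hPY⟩ := proj_exists hQ Y i y hy
    obtain ⟨P', h1, h2⟩ := relProj_exists hX hP hYp hPY
    exact ⟨_, P', h1, h2, rfl⟩
  obtain ⟨P, hP, ⟨f, hf, hfne⟩, hdim⟩ := Nat.sInf_mem hne
  have hs := stable_surj hY hP.1.2 f hf hfne
  have hmem : totdim (subRep (kerSub f hf)) ∈ S Z :=
    ⟨_, relProj_kernel f hf hP hYp.1, nz_kernel f hf hs hP hZp hYZ, rfl⟩
  refine lt_of_le_of_lt (Nat.sInf_le hmem) ?_
  change _ < sInf (S Y)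
  rw [← hdim]
  obtain ⟨i, x, hx⟩ := hfne
  refine Finset.sum_lt_sum (fun j _ => Submodule.finrank_le _) ⟨i, Finset.mem_univ _, ?_⟩
  refine Submodule.finrank_lt (s := LinearMap.ker (f i)) ?_
  intro htop
  exact hx (by rw [← LinearMap.mem_ker, htop]; trivial)

/-- Schur's lemma for stable representations. -/
theorem stable_bij {σ : V → ℤ} {X Y : QuivRep K V A t h} (hX : IsStable K σ X)
    (hY : IsStable K σ Y) (f : ∀ i, X.sp i →ₗ[K] Y.sp i) (hf : IsHom X Y f)
    (hne : ∃ i x, f i x ≠ 0) : ∀ i, Function.Bijective (f i) := by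
  obtain ⟨i0, x, hx⟩ := hne
  have hI0 : (imSub f hf).dimVec ≠ fun _ => 0 := by
    rw [← dimVec_subRep]
    exact dimVec_ne_zero (X := subRep (imSub f hf)) i0 ⟨f i0 x, x, rfl⟩
      (fun h => hx (congrArg Subtype.val h))
  have hKX : (kerSub f hf).dimVec ≠ X.dimVec := by
    intro h
    have := sub_eq_top _ h i0
    exact hx (by
      have h1 : x ∈ (kerSub f hf).sub i0 := by rw [this]; trivial
      exact h1)
  have hsum : (∑ i, σ i * ((imSub f hf).dimVec i : ℤ)) + ∑ i, σ i * ((kerSub f hf).dimVec i : ℤ) = 0 := by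
    rw [← hX.1, ← Finset.sum_add_distrib]
    refine Finset.sum_congr rfl fun i _ => ?_
    have h1 := (f i).finrank_range_add_finrank_ker
    have h2 : (imSub f hf).dimVec i + (kerSub f hf).dimVec i = X.dimVec i := h1
    rw [← h2]; push_cast; ring
  have hI : (imSub f hf).dimVec = Y.dimVec := by
    by_contra hc
    have h1 := hY.2.2 _ hI0 hc
    by_cases hk : (kerSub f hf).dimVec = fun _ => 0
    · rw [hk] at hsum
      simp at hsum
      omega
    · have h2 := hX.2.2 _ hk hKX
      omega
  have hK : (kerSub f hf).dimVec = fun _ => 0 := by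
    by_contra hk
    have h2 := hX.2.2 _ hk hKX
    rw [hI, hY.1] at hsum
    omega
  intro i
  refine ⟨?_, LinearMap.range_eq_top.1 (sub_eq_top _ hI i)⟩
  rw [← LinearMap.ker_eq_bot, ← Submodule.finrank_eq_zero (R := K)]
  exact congrFun hK i

theorem stable_schur [IsAlgClosed K] {σ : V → ℤ} {X : QuivRep K V A t h} (hX : IsStable K σ X) :
    X.IsSchur := by
  obtain ⟨i, x, hx⟩ := exists_ne_zero hX.2.1
  unfold QuivRep.IsSchur QuivRep.homDim
  rw [finrank_eq_one_iff']
  have hid : (fun _ => LinearMap.id : ∀ i, X.sp i →ₗ[K] X.sp i) ∈ QuivRep.homS X X :=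
    (mem_homS_iff _ _ _).2 (fun a x => rfl)
  refine ⟨⟨_, hid⟩, ?_, ?_⟩
  · intro h0
    have h1 := congrFun (congrArg Subtype.val h0) i
    exact hx (LinearMap.congr_fun h1 x)
  · rintro ⟨f, hf⟩
    have : Nontrivial (X.sp i) := ⟨x, 0, hx⟩
    obtain ⟨c, hc⟩ := Module.End.exists_eigenvalue (f i : Module.End K (X.sp i))
    obtain ⟨y, hy⟩ := hc.exists_hasEigenvector
    refine ⟨c, Subtype.ext ?_⟩
    by_contra hne
    have hg : IsHom X X (fun i => f i - c • LinearMap.id) := by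
      intro a x
      have := (mem_homS_iff _ _ _).1 hf a x
      simp only [LinearMap.sub_apply, LinearMap.smul_apply, LinearMap.id_apply, map_sub, map_smul,
        this]
    have hgne : ∃ (i : V) (x : X.sp i), (f i - c • LinearMap.id : X.sp i →ₗ[K] X.sp i) x ≠ 0 := by
      by_contra hall
      push Not at hall
      apply hne
      funext j
      refine LinearMap.ext fun z => ?_
      exact (sub_eq_zero.1 (hall j z)).symm
    have hb := stable_bij hX hX _ hg hgne i
    have h1 : (f i - c • LinearMap.id : X.sp i →ₗ[K] X.sp i) y = 0 := by
      have := hy.apply_eq_smul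
      simp only [LinearMap.sub_apply, LinearMap.smul_apply, LinearMap.id_apply]
      rw [this, sub_self]
    exact hy.2 (hb.1 (by rw [h1, map_zero]))

theorem stable_H0 {σ : V → ℤ} {X Y : QuivRep K V A t h} (hX : IsStable K σ X)
    (hY : IsStable K σ Y) (hn : ¬ RepIso K X Y) : H0 X Y := by
  intro f hf i x
  by_contra hne
  have hb := stable_bij hX hY f hf ⟨i, x, hne⟩
  exact hn ⟨fun i => LinearEquiv.ofBijective (f i) (hb i), fun a x => hf a x⟩

/-- The dual representation of the opposite quiver. -/
abbrev dualRep (X : QuivRep K V A t h) : QuivRep K V A h t where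
  sp i := Module.Dual K (X.sp i)
  map a := (X.map a).dualMap

theorem dimVec_dualRep (X : QuivRep K V A t h) : (dualRep X).dimVec = X.dimVec :=
  funext fun i => Subspace.dual_finrank_eq

theorem exists_dualMap {M N : Type} [AddCommGroup M] [Module K M] [AddCommGroup N] [Module K N]
    [FiniteDimensional K N] (g : Module.Dual K N →ₗ[K] Module.Dual K M) :
    ∃ f : M →ₗ[K] N, ∀ l m, l (f m) = g l m := by
  refine ⟨(Module.evalEquiv K N).symm.toLinearMap.comp (g.dualMap.comp (Module.Dual.eval K M)), ?_⟩
  intro l m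
  simp [Module.apply_evalEquiv_symm_apply]

theorem E0_dual {X Y : QuivRep K V A t h} (hE : E0 X Y) : E0 (dualRep Y) (dualRep X) := by
  intro ψ
  choose ψ' hψ' using fun a => exists_dualMap (ψ a)
  obtain ⟨φ, hφ⟩ := hE (fun a => - ψ' a)
  refine ⟨fun i => (φ i).dualMap, fun a l => LinearMap.ext fun x => ?_⟩
  rw [← hψ']
  have h1 := congrArg l (hφ a x)
  simp only [map_sub, LinearMap.neg_apply, map_neg] at h1
  change l (Y.map a (φ (t a) x)) - l (φ (h a) (X.map a x)) = _
  rw [← neg_eq_iff_eq_neg] at h1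
  rw [← h1]; abel

theorem E0_of_dual {X Y : QuivRep K V A t h} (hE : E0 (dualRep Y) (dualRep X)) : E0 X Y := by
  intro ψ
  obtain ⟨φ, hφ⟩ := hE (fun a => - (ψ a).dualMap)
  choose φ' hφ' using fun i => exists_dualMap (φ i)
  refine ⟨φ', fun a x => ?_⟩
  rw [← sub_eq_zero, ← Module.forall_dual_apply_eq_zero_iff K]
  intro l
  have h1 : φ (t a) (l.comp (Y.map a)) x - φ (h a) l (X.map a x) = - l (ψ a x) :=
    LinearMap.congr_fun (hφ a l) x
  rw [← hφ', ← hφ'] at h1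
  simp only [LinearMap.comp_apply] at h1
  simp only [map_sub]
  rw [← neg_eq_iff_eq_neg] at h1
  rw [← h1]; abel

/-- The coannihilator of a subrepresentation of the dual. -/
def coann {X : QuivRep K V A t h} (U : QuivRep.Sub (dualRep X)) : QuivRep.Sub X where
  sub i := (U.sub i).dualCoannihilator
  le := by
    intro a x hx
    rw [Submodule.mem_dualCoannihilator] at hx ⊢
    intro l hl
    exact hx _ (U.le a l hl)

theorem stable_dual {σ τ : V → ℤ} (hτ : ∀ i, τ i = - σ i) {X : QuivRep K V A t h}
    (hX : IsStable K σ X) : IsStable K τ (dualRep X) := by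
  refine ⟨?_, ?_, ?_⟩
  · rw [dimVec_dualRep]
    simp only [hτ, neg_mul, Finset.sum_neg_distrib, hX.1, neg_zero]
  · rw [dimVec_dualRep]; exact hX.2.1
  · intro U h0 h1
    rw [dimVec_dualRep] at h1
    have hd : ∀ i, U.dimVec i + (coann U).dimVec i = X.dimVec i := fun i =>
      Subspace.finrank_add_finrank_dualCoannihilator_eq (U.sub i)
    have h2 := hX.2.2 (coann U) (fun hz => h1 (funext fun i => by
        have := hd i; rw [hz] at this; simpa using this))
      (fun hz => h0 (funext fun i => by
        have := hd i; rw [hz] at this; simpa using this))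
    have h3 : (∑ i, τ i * (U.dimVec i : ℤ)) = ∑ i, σ i * ((coann U).dimVec i : ℤ) := by
      rw [← sub_eq_zero, ← neg_eq_zero, ← hX.1, ← Finset.sum_sub_distrib, ← Finset.sum_neg_distrib]
      refine Finset.sum_congr rfl fun i _ => ?_
      rw [← hd i, hτ]; push_cast; ring
    rw [h3]; exact h2

theorem order_exists (hQ : Acy t h) {X : QuivRep K V A t h} (hX : E0 X X) {σ : V → ℤ}
    (hσ : σ = weightL t h (natZ X.dimVec) ∨ σ = weightR t h (natZ X.dimVec)) {l : ℕ}
    (E : Fin l → QuivRep K V A t h) (hst : ∀ j, IsStable K σ (E j)) :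
    ∃ p : Fin l → ℤ, ∀ i j, ¬ E0 (E i) (E j) → p j < p i := by
  rcases hσ with rfl | rfl
  · obtain ⟨p, hp⟩ := main_order hQ hX
    exact ⟨fun j => p (E j), fun i j hij => 
      Int.ofNat_lt.2 (hp _ _ (hst i) (hst j) hij)⟩
  · obtain ⟨p, hp⟩ := main_order (acy_swap hQ) (E0_dual hX)
    rw [dimVec_dualRep] at hp
    refine ⟨fun j => - (p (dualRep (E j)) : ℤ), fun i j hij => ?_⟩
    have hs : ∀ j, IsStable K (weightL h t (natZ X.dimVec)) (dualRep (E j)) := fun j =>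
      stable_dual (fun i => weight_swap _ i) (hst j)
    have := hp _ _ (hs j) (hs i) (fun hE => hij (E0_of_dual hE))
    simp only [neg_lt_neg_iff]
    exact_mod_cast this

end numerics

end StmtAux

/-- For non-zero pre-homogeneous `α`, `σ = ⟨α,·⟩` or `−⟨·,α⟩`, and
`E_1, …, E_l` the pairwise non-isomorphic `σ`-stable representations, the dimension
vectors `dim E_i` can be rearranged into a quiver exceptional sequence. -/
theorem stmt4 [IsAlgClosed K] [CharZero K] (t h : A → V) (hQ : Acyclic t h)
    (α : V → ℕ) (hα : α ≠ (fun _ => 0))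
    (hpre : ∃ X : QuivRep K V A t h, X.dimVec = α ∧ X.IsRigid)
    (σ : V → ℤ) (hσ : σ = weightL t h (natZ α) ∨ σ = weightR t h (natZ α))
    (l : ℕ) (E : Fin l → QuivRep K V A t h)
    (hstab : ∀ j, IsStable K σ (E j))
    (hnoniso : ∀ j k, j ≠ k → ¬ RepIso K (E j) (E k))
    (hall : ∀ W : QuivRep K V A t h, IsStable K σ W → ∃ j, RepIso K W (E j)) :
    ∃ π : Equiv.Perm (Fin l), IsQES K t h (fun j => (E (π j)).dimVec) := by
  obtain ⟨X, rfl, hXr⟩ := hpre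
  have hX : StmtAux.E0 X X := (StmtAux.extDim_eq_zero_iff X X).1 hXr
  obtain ⟨p, hp⟩ := StmtAux.order_exists (StmtAux.acy_of_acyclic hQ) hX hσ E hstab
  have hE : ∀ i j, p i ≤ p j → StmtAux.E0 (E i) (E j) := by
    intro i j hij
    by_contra hc
    exact absurd (hp i j hc) (not_lt.2 hij)
  refine ⟨Tuple.sort p, ?_, ?_⟩
  · intro j
    exact ⟨E (Tuple.sort p j), rfl,
      (StmtAux.extDim_eq_zero_iff _ _).2 (hE _ _ le_rfl), StmtAux.stable_schur (hstab _)⟩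
  · intro i j hij
    have hne : Tuple.sort p i ≠ Tuple.sort p j := fun h => hij.ne ((Tuple.sort p).injective h)
    have hH := StmtAux.stable_H0 (hstab _) (hstab _) (hnoniso _ _ hne)
    have hH' := StmtAux.stable_H0 (hstab _) (hstab _) (hnoniso _ _ hne.symm)
    have hEij := hE _ _ (Tuple.monotone_sort p hij.le)
    refine ⟨?_, ?_, ?_⟩
    · refine Nat.eq_zero_of_le_zero (Nat.sInf_le ?_)
      exact ⟨_, _, rfl, rfl, (StmtAux.homDim_eq_zero_iff _ _).2 hH⟩
    · refine Nat.eq_zero_of_le_zero (Nat.sInf_le ?_)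
      exact ⟨_, _, rfl, rfl, (StmtAux.extDim_eq_zero_iff _ _).2 hEij⟩
    · rw [StmtAux.euler_eq, (StmtAux.homDim_eq_zero_iff _ _).2 hH']
      simp

end
end

section
/- Let α be a non-zero pre-homogeneous dimension vector of Q, σ either ⟨α,·⟩ or −⟨·,α⟩, and let E_1,…,E_l be the pairwise non-isomorphic σ-stable representations, ordered so that (β_1,…,β_l) with β_i = dim E_i is a quiver exceptional sequence 𝓔. Let Q(𝓔) be the quiver with vertex set {1,…,l} and exactly −⟨β_i,β_j⟩ arrows from i to j for every pair i ≠ j. Then there exists a K-linear equivalence of categories from rep(Q(𝓔)) to the full subcategory of rep(Q) consisting of σ-semi-stable representations which sends the simple representation S_i of Q(𝓔) at vertex i to (a representation isomorphic to) E_i. -/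
set_option autoImplicit false

noncomputable section

open scoped BigOperators

/-! Basic setup for representations of a quiver with vertex set `V`, arrow set `A`,
tail map `t` and head map `h`, over a field `K`. -/

variable (K : Type) [Field K]
variable {V A : Type} [Fintype V] [DecidableEq V] [Fintype A]

namespace SchofAux

set_option linter.unusedSectionVars false
set_option linter.unusedVariables false

section Basics

variable {K} {t h : A → V}

/-- One-cochains. -/
abbrev C1 (X Y : QuivRep K V A t h) : Type := ∀ a : A, X.sp (t a) →ₗ[K] Y.sp (h a)

/-- Zero-cochains. -/
abbrev C0 (X Y : QuivRep K V A t h) : Type := ∀ i, X.sp i →ₗ[K] Y.sp i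

theorem dmap_apply (X Y : QuivRep K V A t h) (φ : C0 X Y) (a : A) (x : X.sp (t a)) :
    QuivRep.dmap X Y φ a x = φ (h a) (X.map a x) - Y.map a (φ (t a) x) := rfl

theorem repHom_apply {X Y : QuivRep K V A t h} (f : RepHom X Y) (a : A) (x : X.sp (t a)) :
    f.app (h a) (X.map a x) = Y.map a (f.app (t a) x) :=
  LinearMap.congr_fun (f.comm a) x

theorem repHom_ext {X Y : QuivRep K V A t h} {f g : RepHom X Y}
    (hfg : ∀ v x, f.app v x = g.app v x) : f = g := by
  cases f; cases g; congr; funext v; ext x; exact hfg v x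

theorem repIso_of_bij {X Y : QuivRep K V A t h} (f : RepHom X Y)
    (hf : ∀ v, Function.Bijective (f.app v)) : RepIso K X Y :=
  ⟨fun v => LinearEquiv.ofBijective (f.app v) (hf v), fun a x => repHom_apply f a x⟩

theorem repIso_symm {X Y : QuivRep K V A t h} (e : RepIso K X Y) : RepIso K Y X := by
  obtain ⟨e, he⟩ := e
  refine ⟨fun v => (e v).symm, fun a y => ?_⟩
  rw [LinearEquiv.symm_apply_eq, he, LinearEquiv.apply_symm_apply]

theorem repIso_trans {X Y Z : QuivRep K V A t h} (e : RepIso K X Y) (f : RepIso K Y Z) :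
    RepIso K X Z := by
  obtain ⟨e, he⟩ := e
  obtain ⟨f, hf⟩ := f
  refine ⟨fun v => (e v).trans (f v), fun a y => ?_⟩
  simp [he, hf]

/-- A subrepresentation as a representation. -/
def subRep {X : QuivRep K V A t h} (U : QuivRep.Sub X) : QuivRep K V A t h where
  sp i := U.sub i
  map a := (X.map a).restrict (U.le a)

/-- The quotient representation. -/
def quotRep {X : QuivRep K V A t h} (U : QuivRep.Sub X) : QuivRep K V A t h where
  sp i := X.sp i ⧸ U.sub i
  map a := Submodule.mapQ (U.sub (t a)) (U.sub (h a)) (X.map a) (U.le a)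

/-- A subrepresentation of a subrepresentation. -/
def subSub {X : QuivRep K V A t h} {U : QuivRep.Sub X} (T : QuivRep.Sub (subRep U)) :
    QuivRep.Sub X where
  sub i := (T.sub i).map (U.sub i).subtype
  le a x hx := by
    obtain ⟨y, hy, rfl⟩ := hx
    exact ⟨_, T.le a y hy, rfl⟩

theorem subSub_dim {X : QuivRep K V A t h} {U : QuivRep.Sub X} (T : QuivRep.Sub (subRep U)) :
    (subSub T).dimVec = T.dimVec := by
  funext i
  exact Submodule.finrank_map_subtype_eq (U.sub i) (T.sub i)

/-- The inverse image in `X` of a subrepresentation of a quotient. -/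
def comapQuot {X : QuivRep K V A t h} {U : QuivRep.Sub X} (T : QuivRep.Sub (quotRep U)) :
    QuivRep.Sub X where
  sub i := (T.sub i).comap (U.sub i).mkQ
  le a x hx := T.le a _ hx

theorem finrank_map_add_inf_ker {M N : Type} [AddCommGroup M] [Module K M] [AddCommGroup N]
    [Module K N] [FiniteDimensional K M] (f : M →ₗ[K] N) (p : Submodule K M) :
    Module.finrank K (p.map f) + Module.finrank K (p ⊓ LinearMap.ker f : Submodule K M)
      = Module.finrank K p := by
  have h1 := LinearMap.finrank_range_add_finrank_ker (f.comp p.subtype)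
  rw [LinearMap.range_comp, Submodule.range_subtype, LinearMap.ker_comp] at h1
  rw [← h1]
  congr 1
  rw [← Submodule.map_comap_subtype]
  exact Submodule.finrank_map_subtype_eq p _

theorem finrank_comap_mkQ {M : Type} [AddCommGroup M] [Module K M] [FiniteDimensional K M]
    (p : Submodule K M) (q : Submodule K (M ⧸ p)) :
    Module.finrank K (q.comap p.mkQ) = Module.finrank K q + Module.finrank K p := by
  have h1 := finrank_map_add_inf_ker p.mkQ (q.comap p.mkQ)
  rw [Submodule.map_comap_eq_of_surjective (Submodule.mkQ_surjective _),
    Submodule.ker_mkQ, inf_eq_right.2] at h1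
  · exact h1.symm
  · intro x hx
    have : p.mkQ x = 0 := by simpa using hx
    rw [Submodule.mem_comap, this]
    exact Submodule.zero_mem _

theorem comapQuot_dim {X : QuivRep K V A t h} {U : QuivRep.Sub X} (T : QuivRep.Sub (quotRep U))
    (i : V) : (comapQuot T).dimVec i = T.dimVec i + U.dimVec i :=
  finrank_comap_mkQ (U.sub i) (T.sub i)

theorem quot_dim {X : QuivRep K V A t h} (U : QuivRep.Sub X) (i : V) :
    (quotRep U).dimVec i + U.dimVec i = X.dimVec i :=
  Submodule.finrank_quotient_add_finrank (U.sub i)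

/-- The zero subrepresentation is the only one of dimension zero etc. -/
theorem sub_dim_le {X : QuivRep K V A t h} (U : QuivRep.Sub X) (i : V) :
    U.dimVec i ≤ X.dimVec i := Submodule.finrank_le _

/-- The kernel of a morphism. -/
def kerSub {X Y : QuivRep K V A t h} (f : RepHom X Y) : QuivRep.Sub X where
  sub i := LinearMap.ker (f.app i)
  le a x hx := by
    rw [LinearMap.mem_ker] at hx ⊢
    rw [repHom_apply, hx, map_zero]

/-- The image of a morphism. -/
def ranSub {X Y : QuivRep K V A t h} (f : RepHom X Y) : QuivRep.Sub Y where
  sub i := LinearMap.range (f.app i)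
  le a x hx := by
    obtain ⟨y, rfl⟩ := hx
    exact ⟨_, repHom_apply f a y⟩

theorem ker_ran_dim {X Y : QuivRep K V A t h} (f : RepHom X Y) (i : V) :
    (ranSub f).dimVec i + (kerSub f).dimVec i = X.dimVec i :=
  LinearMap.finrank_range_add_finrank_ker (f.app i)

/-- Schur's lemma, first part. -/
theorem schur_iso {σ : V → ℤ} {X Y : QuivRep K V A t h} (hX : IsStable K σ X)
    (hY : IsStable K σ Y) (f : RepHom X Y) (hf : ∃ v x, f.app v x ≠ 0) :
    ∀ v, Function.Bijective (f.app v) := by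
  obtain ⟨v₀, x₀, hx₀⟩ := hf
  have hsum : (∑ i, σ i * ((ranSub f).dimVec i : ℤ)) + ∑ i, σ i * ((kerSub f).dimVec i : ℤ)
      = 0 := by
    rw [← hX.1, ← Finset.sum_add_distrib]
    refine Finset.sum_congr rfl fun i _ => ?_
    rw [← ker_ran_dim f i]; push_cast; ring
  have hran0 : (ranSub f).dimVec ≠ fun _ => 0 := by
    intro h0
    have h1 : Module.finrank K (LinearMap.range (f.app v₀)) = 0 := congrFun h0 v₀
    rw [Submodule.finrank_eq_zero, LinearMap.range_eq_bot] at h1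
    exact hx₀ (by rw [h1]; rfl)
  have hker0 : (kerSub f).dimVec ≠ X.dimVec := by
    intro h0
    apply hran0
    funext i
    have h1 := ker_ran_dim f i
    rw [h0] at h1
    omega
  have hran : (∑ i, σ i * ((ranSub f).dimVec i : ℤ)) ≤ 0 := by
    by_cases hc : (ranSub f).dimVec = Y.dimVec
    · rw [hc, hY.1]
    · exact (hY.2.2 _ hran0 hc).le
  have hker : (kerSub f).dimVec = fun _ => 0 := by
    by_contra hc
    have := hX.2.2 _ hc hker0
    omega
  have hran2 : (ranSub f).dimVec = Y.dimVec := by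
    by_contra hc
    have h1 := hY.2.2 _ hran0 hc
    rw [hker] at hsum
    simp at hsum
    omega
  intro v
  constructor
  · rw [← LinearMap.ker_eq_bot]
    exact Submodule.finrank_eq_zero.1 (congrFun hker v)
  · rw [← LinearMap.range_eq_top]
    exact Submodule.eq_top_of_finrank_eq (congrFun hran2 v)

theorem stable_nonzero {σ : V → ℤ} {X : QuivRep K V A t h} (hX : IsStable K σ X) :
    ∃ v, ∃ x : X.sp v, x ≠ 0 := by
  by_contra hc
  push Not at hc
  apply hX.2.1
  funext v
  have : Subsingleton (X.sp v) := ⟨fun x y => by rw [hc v x, hc v y]⟩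
  exact Module.finrank_zero_of_subsingleton

theorem schur_scalar [IsAlgClosed K] {σ : V → ℤ} {X : QuivRep K V A t h} (hX : IsStable K σ X)
    (f : RepHom X X) : ∃ c : K, ∀ v x, f.app v x = c • x := by
  obtain ⟨v₀, x₀, hx₀⟩ := stable_nonzero hX
  have : Nontrivial (X.sp v₀) := ⟨⟨x₀, 0, hx₀⟩⟩
  obtain ⟨c, hc⟩ := Module.End.exists_eigenvalue (K := K) (f.app v₀)
  obtain ⟨y, hy⟩ := hc.exists_hasEigenvector
  refine ⟨c, ?_⟩
  let g : RepHom X X := ⟨fun v => f.app v - c • LinearMap.id, fun a => by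
    ext x
    simp [repHom_apply]⟩
  by_contra hcon
  push Not at hcon
  obtain ⟨v, x, hvx⟩ := hcon
  have hb := schur_iso hX hX g ⟨v, x, by simpa [g, sub_eq_zero] using hvx⟩ v₀
  apply hy.2
  apply hb.1
  simp [g, hy.apply_eq_smul]

theorem schur_zero {σ : V → ℤ} {X Y : QuivRep K V A t h} (hX : IsStable K σ X)
    (hY : IsStable K σ Y) (hXY : ¬ RepIso K X Y) (f : RepHom X Y) (v : V) (x : X.sp v) :
    f.app v x = 0 := by
  by_contra hc
  exact hXY (repIso_of_bij f (schur_iso hX hY f ⟨v, x, hc⟩))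

theorem homS_eq_ker (X Y : QuivRep K V A t h) :
    QuivRep.homS X Y = LinearMap.ker (QuivRep.dmap X Y) := by
  ext φ
  rw [LinearMap.mem_ker]
  constructor
  · intro hφ
    funext a
    exact sub_eq_zero.2 (hφ a)
  · intro hφ a
    exact sub_eq_zero.1 (congrFun hφ a)

theorem euler_hom_ext (X Y : QuivRep K V A t h) :
    (QuivRep.homDim X Y : ℤ) - QuivRep.extDim X Y
      = eulerForm t h (natZ X.dimVec) (natZ Y.dimVec) := by
  have h1 := LinearMap.finrank_range_add_finrank_ker (QuivRep.dmap X Y)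
  have h2 := Submodule.finrank_quotient_add_finrank (LinearMap.range (QuivRep.dmap X Y))
  rw [Module.finrank_pi_fintype] at h1 h2
  simp only [Module.finrank_linearMap] at h1 h2
  unfold QuivRep.homDim QuivRep.extDim eulerForm natZ QuivRep.dimVec
  rw [homS_eq_ker]
  zify at h1 h2
  linarith

theorem homDim_zero_of {X Y : QuivRep K V A t h}
    (hz : ∀ (f : RepHom X Y) v x, f.app v x = 0) : QuivRep.homDim X Y = 0 := by
  unfold QuivRep.homDim
  rw [Submodule.finrank_eq_zero, eq_bot_iff]
  intro φ hφ
  rw [Submodule.mem_bot]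
  funext v
  ext x
  exact hz ⟨φ, hφ⟩ v x

theorem homDim_one_of {X : QuivRep K V A t h} (hne : ∃ v, ∃ x : X.sp v, x ≠ 0)
    (hz : ∀ f : RepHom X X, ∃ c : K, ∀ v x, f.app v x = c • x) : QuivRep.homDim X X = 1 := by
  obtain ⟨v₀, x₀, hx₀⟩ := hne
  unfold QuivRep.homDim
  refine finrank_eq_one (⟨fun _ => LinearMap.id, fun a => rfl⟩ : QuivRep.homS X X) ?_ ?_
  · intro h0
    have := LinearMap.congr_fun (congrFun (congrArg Subtype.val h0) v₀) x₀
    exact hx₀ this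
  · rintro ⟨φ, hφ⟩
    obtain ⟨c, hc⟩ := hz ⟨φ, hφ⟩
    refine ⟨c, Subtype.ext ?_⟩
    funext v
    ext x
    exact (hc v x).symm

/-- A nonzero semistable representation has a stable subrepresentation with semistable
quotient. -/
theorem exists_stable_sub {σ : V → ℤ} {W : QuivRep K V A t h} (hW : IsSemistable K σ W)
    (hne : W.dimVec ≠ fun _ => 0) :
    ∃ U : QuivRep.Sub W, IsStable K σ (subRep U) ∧ IsSemistable K σ (quotRep U) := by
  classical
  let P : ℕ → Prop := fun n => ∃ U : QuivRep.Sub W, U.dimVec ≠ (fun _ => 0) ∧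
    (∑ i, σ i * (U.dimVec i : ℤ)) = 0 ∧ ∑ i, U.dimVec i = n
  have hP : ∃ n, P n := by
    let T : QuivRep.Sub W := ⟨fun _ => ⊤, fun _ _ _ => trivial⟩
    have hT : T.dimVec = W.dimVec := by
      funext i
      exact finrank_top K (W.sp i)
    exact ⟨_, T, by rw [hT]; exact hne, by rw [hT]; exact hW.1, rfl⟩
  obtain ⟨U, hU0, hU1, hU2⟩ := Nat.find_spec hP
  refine ⟨U, ⟨hU1, hU0, fun T hT0 hT1 => ?_⟩, ?_, fun T => ?_⟩
  · have hle : (∑ i, σ i * ((subSub T).dimVec i : ℤ)) ≤ 0 := hW.2 _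
    rw [subSub_dim] at hle
    refine lt_of_le_of_ne hle fun heq => ?_
    have hmin := Nat.find_min' hP
      ⟨subSub T, by rw [subSub_dim]; exact hT0, by rw [subSub_dim]; exact heq, rfl⟩
    rw [subSub_dim, ← hU2] at hmin
    have hle2 : ∀ i ∈ Finset.univ, T.dimVec i ≤ U.dimVec i := fun i _ => sub_dim_le T i
    have := (Finset.sum_eq_sum_iff_of_le hle2).1 (le_antisymm (Finset.sum_le_sum hle2) hmin)
    exact hT1 (funext fun i => this i (Finset.mem_univ i))
  · have h1 := hW.1
    have h2 : ∀ i, (W.dimVec i : ℤ) = (quotRep U).dimVec i + U.dimVec i := fun i => by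
      rw [← quot_dim U i]; push_cast; rfl
    simp only [h2, mul_add, Finset.sum_add_distrib] at h1
    linarith
  · have h1 := hW.2 (comapQuot T)
    simp only [comapQuot_dim, Nat.cast_add, mul_add, Finset.sum_add_distrib] at h1
    linarith

end Basics

section Twisted

variable {K} {t h : A → V}

/-- Twisted direct sum of a family of representations. -/
abbrev TS {S : Type} [Fintype S] (D : S → QuivRep K V A t h) (η : ∀ s s', C1 (D s) (D s')) :
    QuivRep K V A t h where
  sp v := ∀ s, (D s).sp v
  map a := LinearMap.pi fun s' => ((D s').map a).comp (LinearMap.proj s') +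
    ∑ s, (η s s' a).comp (LinearMap.proj s)

theorem TS_map {S : Type} [Fintype S] (D : S → QuivRep K V A t h) (η : ∀ s s', C1 (D s) (D s'))
    (a : A) (w : (TS D η).sp (t a)) (s' : S) :
    (TS D η).map a w s' = (D s').map a (w s') + ∑ s, η s s' a (w s) := by
  simp [TS]

theorem TS_semistable {l : ℕ} {σ : V → ℤ} {S : Type} [Fintype S] (D : S → QuivRep K V A t h)
    (η : ∀ s s', C1 (D s) (D s')) (c : S → Fin l)
    (hη : ∀ s s', ¬ c s' < c s → ∀ a, η s s' a = 0)
    (hD : ∀ s, IsSemistable K σ (D s)) : IsSemistable K σ (TS D η) := by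
  classical
  have key : ∀ T : Finset S, ∀ U : QuivRep.Sub (TS D η),
      (∀ v, ∀ w ∈ U.sub v, ∀ s, s ∉ T → w s = 0) → (∑ i, σ i * (U.dimVec i : ℤ)) ≤ 0 := by
    intro T
    induction T using Finset.induction_on_max_value c with
    | empty =>
      intro U hU
      apply le_of_eq
      refine Finset.sum_eq_zero fun i _ => ?_
      have : U.sub i = ⊥ := by
        rw [eq_bot_iff]
        intro w hw
        rw [Submodule.mem_bot]
        funext s
        exact hU i w hw s (Finset.notMem_empty s)
      have h2 : U.dimVec i = 0 := Submodule.finrank_eq_zero.2 this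
      rw [h2]; simp
    | insert s0 T hs0 hmax ih =>
      intro U hU
      let U1 : QuivRep.Sub (D s0) := ⟨fun v => (U.sub v).map (LinearMap.proj s0 :
          (∀ s, (D s).sp v) →ₗ[K] (D s0).sp v), by
        rintro a _ ⟨w, hw, rfl⟩
        refine ⟨_, U.le a w hw, ?_⟩
        have h1 := TS_map D η a w s0
        rw [Finset.sum_eq_zero, add_zero] at h1
        · exact h1
        · intro s _
          by_cases hs : s ∈ insert s0 T
          · have : ¬ c s0 < c s := by
              rw [not_lt]
              rcases Finset.mem_insert.1 hs with rfl | hs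
              · exact le_rfl
              · exact hmax s hs
            rw [hη s s0 this a]; rfl
          · rw [hU _ w hw s hs, map_zero]⟩
      let U2 : QuivRep.Sub (TS D η) := ⟨fun v => U.sub v ⊓ LinearMap.ker (LinearMap.proj s0 :
          (∀ s, (D s).sp v) →ₗ[K] (D s0).sp v), by
        rintro a w ⟨hw, hw0⟩
        refine ⟨U.le a w hw, ?_⟩
        have hw0' : w s0 = 0 := hw0
        change (TS D η).map a w s0 = 0
        rw [TS_map, hw0', map_zero, zero_add]
        refine Finset.sum_eq_zero fun s _ => ?_
        by_cases hs : s ∈ insert s0 T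
        · have : ¬ c s0 < c s := by
            rw [not_lt]
            rcases Finset.mem_insert.1 hs with rfl | hs
            · exact le_rfl
            · exact hmax s hs
          rw [hη s s0 this a]; rfl
        · rw [hU _ w hw s hs, map_zero]⟩
      have hdim : ∀ v, U.dimVec v = U1.dimVec v + U2.dimVec v := fun v =>
        (finrank_map_add_inf_ker (LinearMap.proj s0 :
          (∀ s, (D s).sp v) →ₗ[K] (D s0).sp v) (U.sub v)).symm
      have h1 := (hD s0).2 U1
      have h2 := ih U2 (by
        rintro v w ⟨hw, hw0⟩ s hs
        by_cases hss : s = s0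
        · subst hss; exact hw0
        · exact hU v w hw s (by simp [hss, hs]))
      simp only [hdim, Nat.cast_add, mul_add, Finset.sum_add_distrib]
      linarith
  refine ⟨?_, fun U => key Finset.univ U fun v w _ s hs => absurd (Finset.mem_univ s) hs⟩
  have hdim : ∀ v, (TS D η).dimVec v = ∑ s, (D s).dimVec v := fun v =>
    Module.finrank_pi_fintype K
  simp only [hdim, Nat.cast_sum, Finset.mul_sum]
  rw [Finset.sum_comm]
  exact Finset.sum_eq_zero fun s _ => (hD s).1

/-- Reindexing of twisted sums. -/
theorem TS_reindex {S S' : Type} [Fintype S] [Fintype S'] (e : S' ≃ S)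
    (D : S → QuivRep K V A t h) (η : ∀ s s', C1 (D s) (D s')) :
    RepIso K (TS D η) (TS (fun s => D (e s)) (fun s s' => η (e s) (e s'))) := by
  refine repIso_of_bij
    ⟨fun v => LinearMap.pi fun s => LinearMap.proj (e s), fun a => ?_⟩ fun v => ?_
  · refine LinearMap.ext fun w => funext fun s' => ?_
    change (TS D η).map a w (e s') = (TS (fun s => D (e s)) (fun s s' => η (e s) (e s'))).map a
      (fun s => w (e s)) s'
    rw [TS_map, TS_map]
    congr 1
    exact (Equiv.sum_comp e (fun s => η s (e s') a (w s))).symm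
  · exact (Equiv.piCongrLeft (fun s => (D s).sp v) e).symm.bijective

variable {l : ℕ} {m : Fin l → Fin l → ℕ} (E : Fin l → QuivRep K V A t h)
  (ζ : ∀ i j, Fin (m i j) → C1 (E i) (E j))

/-- The twisted sum attached to matrix data. -/
abbrev FM {S : Type} [Fintype S] (c : S → Fin l) (M : ∀ s s', Fin (m (c s) (c s')) → K) :
    QuivRep K V A t h :=
  TS (fun s => E (c s)) (fun s s' => ∑ r, M s s' r • ζ (c s) (c s') r)

theorem FM_map {S : Type} [Fintype S] (c : S → Fin l) (M : ∀ s s', Fin (m (c s) (c s')) → K)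
    (a : A) (w : (FM E ζ c M).sp (t a)) (s' : S) :
    (FM E ζ c M).map a w s' = (E (c s')).map a (w s') +
      ∑ s, ∑ r, M s s' r • ζ (c s) (c s') r a (w s) := by
  refine (TS_map _ _ a w s').trans ?_
  simp [Finset.sum_apply, LinearMap.sum_apply]

theorem sum_fin_zero {n : ℕ} (hn : n = 0) {M : Type} [AddCommMonoid M] (f : Fin n → M) :
    ∑ r, f r = 0 := by
  subst hn; simp

theorem FM_semistable {σ : V → ℤ} (hm : ∀ i j, ¬ j < i → m i j = 0)
    (hE : ∀ i, IsSemistable K σ (E i)) {S : Type} [Fintype S] (c : S → Fin l)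
    (M : ∀ s s', Fin (m (c s) (c s')) → K) : IsSemistable K σ (FM E ζ c M) := by
  refine TS_semistable _ _ c (fun s s' hs a => ?_) (fun s => hE _)
  rw [sum_fin_zero (hm _ _ hs)]; rfl

/-- Normalisation of cocycles. -/
theorem normalize (hm : ∀ i j, ¬ j < i → m i j = 0)
    (hsurj : ∀ i j (γ : C1 (E i) (E j)), ∃ (φ : C0 (E i) (E j)) (g : Fin (m i j) → K),
      ∀ a x, γ a x = QuivRep.dmap (E i) (E j) φ a x + ∑ r, g r • ζ i j r a x)
    {S : Type} [Fintype S] (c : S → Fin l) (M : ∀ s s', Fin (m (c s) (c s')) → K)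
    (j : Fin l) (γ : C1 (FM E ζ c M) (E j)) :
    ∃ (φ : C0 (FM E ζ c M) (E j)) (g : ∀ s, Fin (m (c s) j) → K), ∀ a w,
      γ a w + (E j).map a (φ (t a) w) - φ (h a) ((FM E ζ c M).map a w) =
        ∑ s, ∑ r, g s r • ζ (c s) j r a (w s) := by
  classical
  -- components
  let γc : ∀ s, C1 (E (c s)) (E j) := fun s a =>
    (γ a).comp (LinearMap.single K (fun s => (E (c s)).sp (t a)) s)
  have hγ : ∀ a w, γ a w = ∑ s, γc s a (w s) := by
    intro a w
    have : w = ∑ s, LinearMap.single K (fun s => (E (c s)).sp (t a)) s (w s) := by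
      simpa using (Finset.univ_sum_single w).symm
    conv_lhs => rw [this]
    rw [map_sum]
    rfl
  have key : ∀ n : ℕ, ∃ φ : ∀ s, C0 (E (c s)) (E j), ∀ s, (c s : ℕ) < n →
      ∃ g : Fin (m (c s) j) → K, ∀ a x,
        γc s a x - ∑ s', ∑ r, M s s' r • φ s' (h a) (ζ (c s) (c s') r a x) =
          QuivRep.dmap _ _ (φ s) a x + ∑ r, g r • ζ (c s) j r a x := by
    intro n
    induction n with
    | zero => exact ⟨fun s v => 0, fun s hs => absurd hs (Nat.not_lt_zero _)⟩
    | succ n ih =>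
      obtain ⟨φ, hφ⟩ := ih
      have hex : ∀ s, ∃ (ψ : C0 (E (c s)) (E j)) (g : Fin (m (c s) j) → K), ∀ a x,
        γc s a x - ∑ s', ∑ r, M s s' r • φ s' (h a) (ζ (c s) (c s') r a x) =
          QuivRep.dmap _ _ ψ a x + ∑ r, g r • ζ (c s) j r a x := by
        intro s
        obtain ⟨ψ, g, hg⟩ := hsurj (c s) j (fun a => γc s a -
          ∑ s', ∑ r, M s s' r • (φ s' (h a)).comp (ζ (c s) (c s') r a))
        refine ⟨ψ, g, fun a x => ?_⟩
        rw [← hg a x]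
        simp [LinearMap.sum_apply]
      choose ψ g hg using hex
      refine ⟨fun s => if (c s : ℕ) < n then φ s else ψ s, fun s hs => ?_⟩
      have hsum : ∀ a (x : (E (c s)).sp (t a)),
          ∑ s', ∑ r, M s s' r • (if (c s' : ℕ) < n then φ s' else ψ s') (h a)
              (ζ (c s) (c s') r a x)
            = ∑ s', ∑ r, M s s' r • φ s' (h a) (ζ (c s) (c s') r a x) := by
        intro a x
        refine Finset.sum_congr rfl fun s' _ => ?_
        by_cases hlt : c s' < c s
        · have : (c s' : ℕ) < n := by
            have : (c s' : ℕ) < c s := hlt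
            omega
          rw [if_pos this]
        · rw [sum_fin_zero (hm _ _ hlt), sum_fin_zero (hm _ _ hlt)]
      by_cases hsn : (c s : ℕ) < n
      · obtain ⟨g', hg'⟩ := hφ s hsn
        refine ⟨g', fun a x => ?_⟩
        rw [hsum]
        simp only [if_pos hsn]
        exact hg' a x
      · refine ⟨g s, fun a x => ?_⟩
        rw [hsum]
        simp only [if_neg hsn]
        exact hg s a x
  obtain ⟨φ, hφ⟩ := key l
  choose g hg using fun s => hφ s (c s).2
  refine ⟨fun v => ∑ s, (φ s v).comp (LinearMap.proj (φ := fun s => (E (c s)).sp v) s), g,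
    fun a w => ?_⟩
  have hval : ∀ v (w : (FM E ζ c M).sp v),
      (∑ s, (φ s v).comp (LinearMap.proj (φ := fun s => (E (c s)).sp v) s)) w
        = ∑ s, φ s v (w s) := fun v w => by
    rw [LinearMap.sum_apply]; rfl
  rw [hγ]
  rw [hval, hval]
  have hmap : ∀ s', φ s' (h a) ((FM E ζ c M).map a w s') = φ s' (h a) ((E (c s')).map a (w s'))
      + ∑ s, ∑ r, M s s' r • φ s' (h a) (ζ (c s) (c s') r a (w s)) := by
    intro s'
    rw [FM_map, map_add, map_sum]
    simp
  simp only [hmap]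
  rw [Finset.sum_add_distrib, Finset.sum_comm (γ := S), map_sum]
  have h2 : ∀ s, ∑ r, g s r • ζ (c s) j r a (w s) = γc s a (w s) -
      ∑ s', ∑ r, M s s' r • φ s' (h a) (ζ (c s) (c s') r a (w s)) -
      (φ s (h a) ((E (c s)).map a (w s)) - (E j).map a (φ s (t a) (w s))) := by
    intro s
    rw [hg s a (w s), dmap_apply]
    abel
  simp only [h2, Finset.sum_sub_distrib]
  abel

end Twisted

section Functor

variable {K} {t h : A → V}
variable {l : ℕ} {m : Fin l → Fin l → ℕ} (E : Fin l → QuivRep K V A t h)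
  (ζ : ∀ i j, Fin (m i j) → C1 (E i) (E j))

theorem repr_expand {M N ι ι' : Type} [AddCommGroup M] [Module K M] [AddCommGroup N] [Module K N]
    [Fintype ι] (b : Module.Basis ι K M) (b' : Module.Basis ι' K N) (f : M →ₗ[K] N) (x : M)
    (q : ι') : b'.repr (f x) q = ∑ p, b.repr x p * b'.repr (f (b p)) q := by
  conv_lhs => rw [← b.sum_repr x]
  simp only [map_sum, map_smul, Finsupp.finsetSum_apply, Finsupp.smul_apply, smul_eq_mul]

/-- Representations of the Ext-quiver. -/
abbrev R' (K : Type) [Field K] {l : ℕ} (m : Fin l → Fin l → ℕ) : Type 1 :=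
  QuivRep K (Fin l) ((i : Fin l) × (j : Fin l) × Fin (m i j)) (fun x => x.1) (fun x => x.2.1)

/-- The structure map of a representation of the Ext-quiver. -/
abbrev amap (X : R' K m) (i j : Fin l) (r : Fin (m i j)) : X.sp i →ₗ[K] X.sp j :=
  X.map ⟨i, j, r⟩

/-- Structure coefficients. -/
def coef (X : R' K m) {ι : Fin l → Type} (b : ∀ i, Module.Basis (ι i) K (X.sp i))
    (s s' : Σ i, ι i) (r : Fin (m s.1 s'.1)) : K :=
  (b s'.1).repr (amap X s.1 s'.1 r (b s.1 s.2)) s'.2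

abbrev FB (X : R' K m) {ι : Fin l → Type} [∀ i, Fintype (ι i)]
    (b : ∀ i, Module.Basis (ι i) K (X.sp i)) : QuivRep K V A t h :=
  FM E ζ (S := Σ i, ι i) Sigma.fst (coef X b)

/-- The functor on (not necessarily commuting) families of linear maps. -/
def FBl (X Y : R' K m) {ι ι' : Fin l → Type} [∀ i, Fintype (ι i)] [∀ i, Fintype (ι' i)]
    (b : ∀ i, Module.Basis (ι i) K (X.sp i)) (b' : ∀ i, Module.Basis (ι' i) K (Y.sp i))
    (f : ∀ i, X.sp i →ₗ[K] Y.sp i) : C0 (FB E ζ X b) (FB E ζ Y b') :=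
  fun v => LinearMap.pi fun s' => ∑ p : ι s'.1,
    (b' s'.1).repr (f s'.1 (b s'.1 p)) s'.2 •
      LinearMap.proj (φ := fun s : (Σ i, ι i) => (E s.1).sp v) (⟨s'.1, p⟩ : Σ i, ι i)

theorem FBl_apply (X Y : R' K m) {ι ι' : Fin l → Type} [∀ i, Fintype (ι i)]
    [∀ i, Fintype (ι' i)]
    (b : ∀ i, Module.Basis (ι i) K (X.sp i)) (b' : ∀ i, Module.Basis (ι' i) K (Y.sp i))
    (f : ∀ i, X.sp i →ₗ[K] Y.sp i) (v : V) (w : (FB E ζ X b).sp v) (s' : Σ i, ι' i) :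
    FBl E ζ X Y b b' f v w s' =
      ∑ p : ι s'.1, (b' s'.1).repr (f s'.1 (b s'.1 p)) s'.2 • w ⟨s'.1, p⟩ := by
  simp [FBl, LinearMap.sum_apply]

theorem FBl_comm (X Y : R' K m) {ι ι' : Fin l → Type} [∀ i, Fintype (ι i)]
    [∀ i, Fintype (ι' i)]
    (b : ∀ i, Module.Basis (ι i) K (X.sp i)) (b' : ∀ i, Module.Basis (ι' i) K (Y.sp i))
    (f : ∀ i, X.sp i →ₗ[K] Y.sp i) (a : A) (w : (FB E ζ X b).sp (t a)) (s' : Σ i, ι' i) :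
    FBl E ζ X Y b b' f (h a) ((FB E ζ X b).map a w) s' =
      (FB E ζ Y b').map a (FBl E ζ X Y b b' f (t a) w) s' +
      ∑ s : Σ i, ι i, ∑ r, (b' s'.1).repr (f s'.1 (amap X s.1 s'.1 r (b s.1 s.2))
        - amap Y s.1 s'.1 r (f s.1 (b s.1 s.2))) s'.2 • ζ s.1 s'.1 r a (w s) := by
  obtain ⟨j, q⟩ := s'
  rw [FBl_apply, FM_map, FBl_apply]
  have hX : ∀ (s : Σ i, ι i) (r : Fin (m s.1 j)),
      (b' j).repr (f j (amap X s.1 j r (b s.1 s.2))) q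
        = ∑ p, coef X b s ⟨j, p⟩ r * (b' j).repr (f j (b j p)) q := by
    intro s r
    exact repr_expand (b j) (b' j) (f j) _ q
  have hY : ∀ (s : Σ i, ι i) (r : Fin (m s.1 j)),
      (b' j).repr (amap Y s.1 j r (f s.1 (b s.1 s.2))) q
        = ∑ p, (b' s.1).repr (f s.1 (b s.1 s.2)) p * coef Y b' ⟨s.1, p⟩ ⟨j, q⟩ r := by
    intro s r
    exact repr_expand (b' s.1) (b' j) (amap Y s.1 j r) _ q
  have h1 : ∀ p, (FB E ζ X b).map a w ⟨j, p⟩ = (E j).map a (w ⟨j, p⟩) +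
      ∑ s : Σ i, ι i, ∑ r, coef X b s ⟨j, p⟩ r • ζ s.1 j r a (w s) := fun p => FM_map _ _ _ _ _ _ _
  have h2 : ∑ s : Σ i, ι' i, ∑ r, coef Y b' s ⟨j, q⟩ r •
        ζ s.1 j r a (FBl E ζ X Y b b' f (t a) w s)
      = ∑ s : Σ i, ι i, ∑ r, (b' j).repr (amap Y s.1 j r (f s.1 (b s.1 s.2))) q •
        ζ s.1 j r a (w s) := by
    have hw : ∀ i p', FBl E ζ X Y b b' f (t a) w ⟨i, p'⟩ =
        ∑ p, (b' i).repr (f i (b i p)) p' • w ⟨i, p⟩ := fun i p' => FBl_apply _ _ _ _ _ _ _ _ _ _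
    simp only [hY]
    rw [Fintype.sum_sigma, Fintype.sum_sigma]
    simp only [hw]
    refine Finset.sum_congr rfl fun i _ => ?_
    simp only [map_sum, map_smul, Finset.smul_sum, Finset.sum_smul, smul_smul]
    change ∑ p' : ι' i, ∑ r : Fin (m i j), ∑ p : ι i,
        (coef Y b' ⟨i, p'⟩ ⟨j, q⟩ r * (b' i).repr (f i (b i p)) p') • ζ i j r a (w ⟨i, p⟩) =
      ∑ p : ι i, ∑ r : Fin (m i j), ∑ p' : ι' i,
        ((b' i).repr (f i (b i p)) p' * coef Y b' ⟨i, p'⟩ ⟨j, q⟩ r) • ζ i j r a (w ⟨i, p⟩)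
    rw [Finset.sum_comm]
    rw [Finset.sum_comm (s := (Finset.univ : Finset (ι i)))]
    refine Finset.sum_congr rfl fun r _ => ?_
    rw [Finset.sum_comm]
    refine Finset.sum_congr rfl fun p _ => ?_
    refine Finset.sum_congr rfl fun p' _ => ?_
    rw [mul_comm]
  have h3 : ∑ p, (b' j).repr (f j (b j p)) q •
        ∑ s : Σ i, ι i, ∑ r, coef X b s ⟨j, p⟩ r • ζ s.1 j r a (w s)
      = ∑ s : Σ i, ι i, ∑ r, (b' j).repr (f j (amap X s.1 j r (b s.1 s.2))) q •
        ζ s.1 j r a (w s) := by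
    simp only [hX, Finset.smul_sum, Finset.sum_smul, smul_smul]
    rw [Finset.sum_comm]
    refine Finset.sum_congr rfl fun s _ => ?_
    rw [Finset.sum_comm]
    refine Finset.sum_congr rfl fun r _ => ?_
    refine Finset.sum_congr rfl fun p _ => ?_
    rw [mul_comm]
  simp only [h1, smul_add, Finset.sum_add_distrib]
  rw [h3]
  erw [h2]
  simp only [map_sub, Finsupp.sub_apply, sub_smul, Finset.sum_sub_distrib, map_sum, map_smul]
  abel

/-- The functor on morphisms. -/
def FBh {X Y : R' K m} {ι ι' : Fin l → Type} [∀ i, Fintype (ι i)] [∀ i, Fintype (ι' i)]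
    (b : ∀ i, Module.Basis (ι i) K (X.sp i)) (b' : ∀ i, Module.Basis (ι' i) K (Y.sp i))
    (f : RepHom X Y) : RepHom (FB E ζ X b) (FB E ζ Y b') where
  app := FBl E ζ X Y b b' f.app
  comm a := by
    refine LinearMap.ext fun w => funext fun s' => ?_
    refine (FBl_comm E ζ X Y b b' f.app a w s').trans ?_
    rw [Finset.sum_eq_zero, add_zero]
    · rfl
    · intro s _
      refine Finset.sum_eq_zero fun r _ => ?_
      have : f.app s'.1 (amap X s.1 s'.1 r (b s.1 s.2))
        = amap Y s.1 s'.1 r (f.app s.1 (b s.1 s.2)) := LinearMap.congr_fun (f.comm ⟨s.1, s'.1, r⟩) _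
      rw [this, sub_self]; simp

theorem FBh_apply {X Y : R' K m} {ι ι' : Fin l → Type} [∀ i, Fintype (ι i)]
    [∀ i, Fintype (ι' i)]
    (b : ∀ i, Module.Basis (ι i) K (X.sp i)) (b' : ∀ i, Module.Basis (ι' i) K (Y.sp i))
    (f : RepHom X Y) (v : V) (w : (FB E ζ X b).sp v) (s' : Σ i, ι' i) :
    (FBh E ζ b b' f).app v w s' =
      ∑ p : ι s'.1, (b' s'.1).repr (f.app s'.1 (b s'.1 p)) s'.2 • w ⟨s'.1, p⟩ :=
  FBl_apply E ζ X Y b b' f.app v w s'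

theorem FBh_id {X : R' K m} {ι : Fin l → Type} [∀ i, Fintype (ι i)]
    (b : ∀ i, Module.Basis (ι i) K (X.sp i)) :
    FBh E ζ b b (RepHom.idHom X) = RepHom.idHom (FB E ζ X b) := by
  classical
  refine repHom_ext fun v w => funext fun s' => ?_
  rw [FBh_apply]
  simp [RepHom.idHom, Finsupp.single_apply]

theorem FBh_comp {X Y Z : R' K m} {ι ι' ι'' : Fin l → Type} [∀ i, Fintype (ι i)]
    [∀ i, Fintype (ι' i)] [∀ i, Fintype (ι'' i)]
    (b : ∀ i, Module.Basis (ι i) K (X.sp i)) (b' : ∀ i, Module.Basis (ι' i) K (Y.sp i))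
    (b'' : ∀ i, Module.Basis (ι'' i) K (Z.sp i)) (f : RepHom X Y) (g : RepHom Y Z) :
    FBh E ζ b b'' (f.comp g) = (FBh E ζ b b' f).comp (FBh E ζ b' b'' g) := by
  refine repHom_ext fun v w => funext fun s' => ?_
  obtain ⟨j, q⟩ := s'
  rw [FBh_apply]
  change _ = (FBh E ζ b' b'' g).app v ((FBh E ζ b b' f).app v w) ⟨j, q⟩
  rw [FBh_apply]
  have hw : ∀ p', (FBh E ζ b b' f).app v w ⟨j, p'⟩ =
      ∑ p, (b' j).repr (f.app j (b j p)) p' • w ⟨j, p⟩ := fun p' => FBh_apply _ _ _ _ _ _ _ _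
  simp only [hw, Finset.smul_sum, smul_smul]
  rw [Finset.sum_comm]
  refine Finset.sum_congr rfl fun p _ => ?_
  rw [← Finset.sum_smul]
  congr 1
  change (b'' j).repr (g.app j (f.app j (b j p))) q = _
  rw [repr_expand (b' j) (b'' j) (g.app j)]
  exact Finset.sum_congr rfl fun _ _ => mul_comm _ _

theorem FBh_iso {X : R' K m} {ι ι' : Fin l → Type} [∀ i, Fintype (ι i)]
    [∀ i, Fintype (ι' i)]
    (b : ∀ i, Module.Basis (ι i) K (X.sp i)) (b' : ∀ i, Module.Basis (ι' i) K (X.sp i)) :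
    RepIso K (FB E ζ X b) (FB E ζ X b') := by
  have hid : (RepHom.idHom X).comp (RepHom.idHom X) = RepHom.idHom X :=
    repHom_ext fun v x => rfl
  have h1 := FBh_comp E ζ b b' b (RepHom.idHom X) (RepHom.idHom X)
  have h2 := FBh_comp E ζ b' b b' (RepHom.idHom X) (RepHom.idHom X)
  rw [hid, FBh_id] at h1 h2
  refine repIso_of_bij (FBh E ζ b b' (RepHom.idHom X)) fun v => ?_
  refine Function.bijective_iff_has_inverse.2 ⟨(FBh E ζ b' b (RepHom.idHom X)).app v, ?_, ?_⟩
  · intro x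
    exact (LinearMap.congr_fun (congrFun (congrArg RepHom.app h1) v) x).symm
  · intro x
    exact (LinearMap.congr_fun (congrFun (congrArg RepHom.app h2) v) x).symm

theorem FBh_add {X Y : R' K m} {ι ι' : Fin l → Type} [∀ i, Fintype (ι i)]
    [∀ i, Fintype (ι' i)]
    (b : ∀ i, Module.Basis (ι i) K (X.sp i)) (b' : ∀ i, Module.Basis (ι' i) K (Y.sp i))
    (f g : RepHom X Y) : FBh E ζ b b' (f.add g) = (FBh E ζ b b' f).add (FBh E ζ b b' g) := by
  refine repHom_ext fun v w => funext fun s' => ?_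
  rw [FBh_apply]
  change _ = (FBh E ζ b b' f).app v w s' + (FBh E ζ b b' g).app v w s'
  rw [FBh_apply, FBh_apply, ← Finset.sum_add_distrib]
  simp [RepHom.add, add_smul]

theorem FBh_smul {X Y : R' K m} {ι ι' : Fin l → Type} [∀ i, Fintype (ι i)]
    [∀ i, Fintype (ι' i)]
    (b : ∀ i, Module.Basis (ι i) K (X.sp i)) (b' : ∀ i, Module.Basis (ι' i) K (Y.sp i))
    (c : K) (f : RepHom X Y) :
    FBh E ζ b b' (RepHom.smul c f) = RepHom.smul c (FBh E ζ b b' f) := by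
  refine repHom_ext fun v w => funext fun s' => ?_
  rw [FBh_apply]
  change _ = c • (FBh E ζ b b' f).app v w s'
  rw [FBh_apply, Finset.smul_sum]
  simp [RepHom.smul, smul_smul]

theorem FBh_inj (hne : ∀ i, ∃ v, ∃ x : (E i).sp v, x ≠ 0)
    {X Y : R' K m} {ι ι' : Fin l → Type} [∀ i, Fintype (ι i)]
    [∀ i, Fintype (ι' i)]
    (b : ∀ i, Module.Basis (ι i) K (X.sp i)) (b' : ∀ i, Module.Basis (ι' i) K (Y.sp i)) :
    Function.Injective (FBh E ζ b b' : RepHom X Y → _) := by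
  classical
  intro f g hfg
  have key : ∀ j, f.app j = g.app j := by
    intro j
    refine (b j).ext fun p => (b' j).repr.injective (Finsupp.ext fun q => ?_)
    obtain ⟨v, x, hx⟩ := hne j
    let w : (FB E ζ X b).sp v := Pi.single (M := fun s : (Σ i, ι i) => (E s.1).sp v) ⟨j, p⟩ x
    have hw : ∀ p', w ⟨j, p'⟩ = if p' = p then x else 0 := by
      intro p'
      by_cases hp : p' = p
      · subst hp; simp [w]
      · simp only [w, if_neg hp]
        exact Pi.single_eq_of_ne (by simpa using hp) _
    have h1 : (FBh E ζ b b' f).app v w ⟨j, q⟩ = (FBh E ζ b b' g).app v w ⟨j, q⟩ := by rw [hfg]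
    rw [FBh_apply, FBh_apply] at h1
    simp only [hw] at h1
    simp only [smul_ite, smul_zero, Finset.sum_ite_eq', Finset.mem_univ, if_true] at h1
    exact smul_left_injective K hx h1
  cases f; cases g; congr; exact funext key

end Functor

section Full

variable {K} {t h : A → V}
variable {l : ℕ} {m : Fin l → Fin l → ℕ} (E : Fin l → QuivRep K V A t h)
  (ζ : ∀ i j, Fin (m i j) → C1 (E i) (E j))

section Cmp

variable {E ζ}
variable {S S' : Type} [Fintype S] [Fintype S'] [DecidableEq S] {c : S → Fin l} {c' : S' → Fin l}
  {M : ∀ s s', Fin (m (c s) (c s')) → K} {M' : ∀ s s', Fin (m (c' s) (c' s')) → K}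

def cmp (φ : C0 (FM E ζ c M) (FM E ζ c' M')) (s : S) (s' : S') : C0 (E (c s)) (E (c' s')) :=
  fun v => (LinearMap.proj (φ := fun s => (E (c' s)).sp v) s').comp
    ((φ v).comp (LinearMap.single K (fun s => (E (c s)).sp v) s))

theorem cmp_apply (φ : C0 (FM E ζ c M) (FM E ζ c' M')) (s : S) (s' : S') (v : V)
    (x : (E (c s)).sp v) : cmp φ s s' v x = φ v (Pi.single s x) s' := rfl

theorem sum_cmp (φ : C0 (FM E ζ c M) (FM E ζ c' M')) (v : V) (w : (FM E ζ c M).sp v) (s' : S') :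
    φ v w s' = ∑ s, cmp φ s s' v (w s) := by
  have hw : w = ∑ s, Pi.single s (w s) := (Finset.univ_sum_single w).symm
  conv_lhs => rw [hw]
  rw [map_sum, Finset.sum_apply]
  rfl

theorem cmp_step (hm : ∀ i j, ¬ j < i → m i j = 0) (φ : C0 (FM E ζ c M) (FM E ζ c' M'))
    (δ : ∀ s s', C1 (E (c s)) (E (c' s')))
    (hδ : ∀ a w s', φ (h a) ((FM E ζ c M).map a w) s' =
      (FM E ζ c' M').map a (φ (t a) w) s' + ∑ s, δ s s' a (w s))
    (s : S) (s' : S') (h1 : ∀ k, c k < c s → cmp φ k s' = 0)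
    (h2 : ∀ k, c' s' < c' k → cmp φ s k = 0) (a : A) (x : (E (c s)).sp (t a)) :
    QuivRep.dmap _ _ (cmp φ s s') a x = δ s s' a x := by
  have h0 := hδ a (Pi.single s x) s'
  rw [sum_cmp φ, FM_map] at h0
  have e1 : ∑ k, δ k s' a ((Pi.single s x : (FM E ζ c M).sp (t a)) k) = δ s s' a x := by
    rw [Finset.sum_eq_single s]
    · rw [Pi.single_eq_same]
    · intro k _ hk
      rw [Pi.single_eq_of_ne hk, map_zero]
    · intro hs; exact absurd (Finset.mem_univ s) hs
  have e2 : ∑ k, ∑ r, M' k s' r • ζ (c' k) (c' s') r a (φ (t a) (Pi.single s x) k) = 0 := by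
    refine Finset.sum_eq_zero fun k _ => ?_
    by_cases hk : c' s' < c' k
    · have : φ (t a) (Pi.single s x) k = 0 := by
        rw [← cmp_apply, h2 k hk]; rfl
      rw [this]; simp
    · exact sum_fin_zero (hm _ _ hk) _
  have e3 : ∀ k, (FM E ζ c M).map a (Pi.single s x) k =
      (E (c k)).map a ((Pi.single s x : (FM E ζ c M).sp (t a)) k) +
        ∑ r, M s k r • ζ (c s) (c k) r a x := by
    intro k
    rw [FM_map, Finset.sum_eq_single s]
    · rw [Pi.single_eq_same]
    · intro k' _ hk
      rw [Pi.single_eq_of_ne hk]; simp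
    · intro hs; exact absurd (Finset.mem_univ s) hs
  have e4 : ∑ k, cmp φ k s' (h a) ((FM E ζ c M).map a (Pi.single s x) k) =
      cmp φ s s' (h a) ((E (c s)).map a x) := by
    simp only [e3, map_add, Finset.sum_add_distrib]
    rw [Finset.sum_eq_single s, Pi.single_eq_same]
    · convert add_zero _ using 2
      refine Finset.sum_eq_zero fun k _ => ?_
      by_cases hk : c k < c s
      · rw [h1 k hk]; rfl
      · rw [sum_fin_zero (hm _ _ hk), map_zero]
    · intro k _ hk
      rw [Pi.single_eq_of_ne hk, map_zero, map_zero]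
    · intro hs; exact absurd (Finset.mem_univ s) hs
  rw [e1, e2, e4, add_zero] at h0
  rw [dmap_apply, h0, cmp_apply]
  abel

/-- A zero-cochain in the kernel of `dmap` is a morphism. -/
def homOf {X Y : QuivRep K V A t h} (φ : C0 X Y)
    (hφ : ∀ a x, QuivRep.dmap X Y φ a x = 0) : RepHom X Y :=
  ⟨φ, fun a => LinearMap.ext fun x => sub_eq_zero.1 (hφ a x)⟩

theorem phase1 (hm : ∀ i j, ¬ j < i → m i j = 0)
    (hzero : ∀ i j, i ≠ j → ∀ (f : RepHom (E i) (E j)) v x, f.app v x = 0)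
    (ψ : RepHom (FM E ζ c M) (FM E ζ c' M')) :
    ∀ (n : ℕ) (s : S) (s' : S'), (c s : ℕ) + (l - c' s') = n → c s < c' s' →
      cmp ψ.app s s' = 0 := by
  intro n
  induction n using Nat.strong_induction_on with
  | _ n ih =>
    intro s s' hn hlt
    have hst := cmp_step hm ψ.app (fun _ _ _ => 0)
      (fun a w s' => by rw [repHom_apply ψ]; simp) s s'
      (fun k hk => ih _ (by have : (c k : ℕ) < c s := hk; omega) k s' rfl (hk.trans hlt))
      (fun k hk => ih _ (by
        have : (c' s' : ℕ) < c' k := hk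
        have := (c' k).2
        omega) s k rfl (hlt.trans hk))
    funext v
    ext x
    exact hzero _ _ hlt.ne (homOf _ hst) v x

theorem phase3 (hm : ∀ i j, ¬ j < i → m i j = 0)
    (hzero : ∀ i j, i ≠ j → ∀ (f : RepHom (E i) (E j)) v x, f.app v x = 0)
    (hlin : ∀ i j (g : Fin (m i j) → K) (φ : C0 (E i) (E j)),
      (∀ a x, QuivRep.dmap (E i) (E j) φ a x = ∑ r, g r • ζ i j r a x) → g = 0)
    (φ : C0 (FM E ζ c M) (FM E ζ c' M')) (D : ∀ s s', Fin (m (c s) (c' s')) → K)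
    (hδ : ∀ a w s', φ (h a) ((FM E ζ c M).map a w) s' =
      (FM E ζ c' M').map a (φ (t a) w) s' + ∑ s, ∑ r, D s s' r • ζ (c s) (c' s') r a (w s))
    (hle : ∀ s s', c s ≤ c' s' → cmp φ s s' = 0) :
    ∀ (n : ℕ) (s : S) (s' : S'), (c s : ℕ) - c' s' = n → c' s' < c s →
      cmp φ s s' = 0 ∧ D s s' = 0 := by
  intro n
  induction n using Nat.strong_induction_on with
  | _ n ih =>
    intro s s' hn hlt
    have hlt' : (c' s' : ℕ) < c s := hlt
    have hst := cmp_step hm φ (fun s s' => ∑ r, D s s' r • ζ (c s) (c' s') r)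
      (fun a w s' => by rw [hδ]; simp [Finset.sum_apply, LinearMap.sum_apply]) s s'
      (fun k hk => by
        by_cases hk2 : c k ≤ c' s'
        · exact hle _ _ hk2
        · rw [not_le] at hk2
          have : (c k : ℕ) < c s := hk
          have : (c' s' : ℕ) < c k := hk2
          exact (ih _ (by omega) k s' rfl hk2).1)
      (fun k hk => by
        by_cases hk2 : c s ≤ c' k
        · exact hle _ _ hk2
        · rw [not_le] at hk2
          have : (c' s' : ℕ) < c' k := hk
          have : (c' k : ℕ) < c s := hk2
          exact (ih _ (by omega) s k rfl hk2).1)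
    have hD : D s s' = 0 := hlin _ _ _ _ (fun a x => by
      rw [hst a x]; simp [Finset.sum_apply, LinearMap.sum_apply])
    refine ⟨?_, hD⟩
    funext v
    ext x
    refine hzero _ _ hlt.ne' (homOf _ fun a x => ?_) v x
    rw [hst a x, hD]
    simp

end Cmp

theorem FBh_full (hm : ∀ i j, ¬ j < i → m i j = 0)
    (hzero : ∀ i j, i ≠ j → ∀ (f : RepHom (E i) (E j)) v x, f.app v x = 0)
    (hscal : ∀ i (f : RepHom (E i) (E i)), ∃ c : K, ∀ v x, f.app v x = c • x)
    (hlin : ∀ i j (g : Fin (m i j) → K) (φ : C0 (E i) (E j)),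
      (∀ a x, QuivRep.dmap (E i) (E j) φ a x = ∑ r, g r • ζ i j r a x) → g = 0)
    {X Y : R' K m} {ι ι' : Fin l → Type} [∀ i, Fintype (ι i)]
    [∀ i, Fintype (ι' i)]
    (b : ∀ i, Module.Basis (ι i) K (X.sp i)) (b' : ∀ i, Module.Basis (ι' i) K (Y.sp i))
    (ψ : RepHom (FB E ζ X b) (FB E ζ Y b')) : ∃ f : RepHom X Y, FBh E ζ b b' f = ψ := by
  classical
  have p1 : ∀ (s : Σ i, ι i) (s' : Σ i, ι' i), s.1 < s'.1 → cmp ψ.app s s' = 0 :=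
    fun s s' hs => phase1 hm hzero ψ _ s s' rfl hs
  have p2 : ∀ i (p : ι i) (q : ι' i), ∃ lam : K, ∀ v (x : (E i).sp v),
      cmp ψ.app (⟨i, p⟩ : Σ i, ι i) (⟨i, q⟩ : Σ i, ι' i) v x = lam • x := by
    intro i p q
    have hst := cmp_step hm ψ.app (fun _ _ _ => 0)
      (fun a w s' => by rw [repHom_apply ψ]; simp) (⟨i, p⟩ : Σ i, ι i) (⟨i, q⟩ : Σ i, ι' i)
      (fun k hk => p1 _ _ hk) (fun k hk => p1 _ _ hk)
    exact hscal i (homOf _ hst)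
  choose lam hlam using p2
  let f : ∀ i, X.sp i →ₗ[K] Y.sp i := fun i => (b i).constr K fun p => ∑ q, lam i p q • b' i q
  have hf : ∀ i p q, (b' i).repr (f i (b i p)) q = lam i p q := by
    intro i p q
    have : f i (b i p) = ∑ q, lam i p q • b' i q := by
      simp only [f]
      rw [Module.Basis.constr_basis]
    rw [this, Module.Basis.repr_sum_self]
  have hcF : ∀ (s : Σ i, ι i) (s' : Σ i, ι' i) v (x : (E s.1).sp v), s.1 ≠ s'.1 →
      cmp (FBl E ζ X Y b b' f) s s' v x = 0 := by
    intro s s' v x hs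
    rw [cmp_apply, FBl_apply]
    refine Finset.sum_eq_zero fun p _ => ?_
    rw [Pi.single_eq_of_ne, smul_zero]
    rintro rfl
    exact hs rfl
  have hcF2 : ∀ i (p : ι i) (q : ι' i) v (x : (E i).sp v),
      cmp (FBl E ζ X Y b b' f) (⟨i, p⟩ : Σ i, ι i) (⟨i, q⟩ : Σ i, ι' i) v x = lam i p q • x := by
    intro i p q v x
    rw [cmp_apply, FBl_apply]
    rw [Finset.sum_eq_single p]
    · rw [Pi.single_eq_same, hf]
    · intro p' _ hp
      rw [Pi.single_eq_of_ne, smul_zero]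
      simpa using hp
    · intro hs; exact absurd (Finset.mem_univ p) hs
  let φ : C0 (FB E ζ X b) (FB E ζ Y b') := fun v => FBl E ζ X Y b b' f v - ψ.app v
  have hφc : ∀ s s', cmp φ s s' = cmp (FBl E ζ X Y b b' f) s s' - cmp ψ.app s s' := by
    intro s s'
    funext v
    ext x
    rfl
  have hle : ∀ (s : Σ i, ι i) (s' : Σ i, ι' i), s.1 ≤ s'.1 → cmp φ s s' = 0 := by
    rintro ⟨i, p⟩ ⟨j, q⟩ hij
    rw [hφc]
    funext v
    ext x
    rcases hij.lt_or_eq with hlt | heq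
    · rw [p1 _ _ hlt]
      change cmp (FBl E ζ X Y b b' f) _ _ v x - 0 = 0
      rw [hcF _ _ v x hlt.ne, sub_zero]
    · have heq : i = j := heq
      subst heq
      change cmp (FBl E ζ X Y b b' f) _ _ v x - cmp ψ.app _ _ v x = 0
      rw [hcF2, hlam, sub_self]
  have p3 := phase3 hm hzero hlin φ (fun s s' r => (b' s'.1).repr
      (f s'.1 (amap X s.1 s'.1 r (b s.1 s.2)) - amap Y s.1 s'.1 r (f s.1 (b s.1 s.2))) s'.2)
    (fun a w s' => by
      change FBl E ζ X Y b b' f (h a) ((FB E ζ X b).map a w) s' -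
        ψ.app (h a) ((FB E ζ X b).map a w) s' =
        (FB E ζ Y b').map a (FBl E ζ X Y b b' f (t a) w - ψ.app (t a) w) s' + _
      rw [FBl_comm, map_sub, repHom_apply ψ, Pi.sub_apply]
      abel) hle
  have hφ0 : ∀ (s : Σ i, ι i) (s' : Σ i, ι' i), cmp φ s s' = 0 := by
    intro s s'
    by_cases hs : s.1 ≤ s'.1
    · exact hle _ _ hs
    · exact (p3 _ s s' rfl (not_le.1 hs)).1
  have hcomm : ∀ i j (r : Fin (m i j)), (f j).comp (amap X i j r) = (amap Y i j r).comp (f i) := by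
    intro i j r
    by_cases hij : j < i
    · refine (b i).ext fun p => sub_eq_zero.1 ((b' j).repr.injective ?_)
      rw [map_zero]
      refine Finsupp.ext fun q => ?_
      exact congrFun (p3 _ (⟨i, p⟩ : Σ i, ι i) (⟨j, q⟩ : Σ i, ι' i) rfl hij).2 r
    · have := hm i j hij
      exact (Fin.cast this r).elim0
  refine ⟨⟨f, fun x => hcomm x.1 x.2.1 x.2.2⟩, repHom_ext fun v w => funext fun s' => ?_⟩
  have h0 : φ v w s' = 0 := by
    rw [sum_cmp]
    refine Finset.sum_eq_zero fun s _ => ?_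
    rw [hφ0]; rfl
  exact sub_eq_zero.1 h0

end Full

section Ess

variable {K} {t h : A → V}
variable {l : ℕ} {m : Fin l → Fin l → ℕ} (E : Fin l → QuivRep K V A t h)
  (ζ : ∀ i j, Fin (m i j) → C1 (E i) (E j))

/-- Colour function on `Option S`. -/
def optC {S : Type} (c : S → Fin l) (j : Fin l) : Option S → Fin l
  | none => j
  | some s => c s

/-- Matrix data on `Option S`. -/
def optM {S : Type} (c : S → Fin l) (j : Fin l) (M : ∀ s s', Fin (m (c s) (c s')) → K)
    (g : ∀ s, Fin (m (c s) j) → K) :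
    ∀ s s' : Option S, Fin (m (optC c j s) (optC c j s')) → K
  | some s, some s' => M s s'
  | some s, none => g s
  | none, _ => fun _ => 0

theorem optFM_none {S : Type} [Fintype S] (c : S → Fin l) (j : Fin l)
    (M : ∀ s s', Fin (m (c s) (c s')) → K)
    (g : ∀ s, Fin (m (c s) j) → K) (a : A) (w : (FM E ζ (optC c j) (optM c j M g)).sp (t a)) :
    (FM E ζ (optC c j) (optM c j M g)).map a w none = (E j).map a (w none) +
      ∑ s, ∑ r, g s r • ζ (c s) j r a (w (some s)) := by
  refine (FM_map _ _ _ _ _ _ _).trans ?_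
  refine congrArg₂ (· + ·) rfl ?_
  refine (Fintype.sum_option _).trans ?_
  have h0 : (∑ r : Fin (m (optC c j none) (optC c j none)), optM c j M g none none r •
      ζ (optC c j none) (optC c j none) r a (w none)) = 0 :=
    Finset.sum_eq_zero fun r _ => zero_smul K _
  rw [h0]
  exact zero_add _

theorem optFM_some {S : Type} [Fintype S] (c : S → Fin l) (j : Fin l)
    (M : ∀ s s', Fin (m (c s) (c s')) → K)
    (g : ∀ s, Fin (m (c s) j) → K) (a : A) (w : (FM E ζ (optC c j) (optM c j M g)).sp (t a))
    (s' : S) :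
    (FM E ζ (optC c j) (optM c j M g)).map a w (some s') =
      (FM E ζ c M).map a (fun s => w (some s)) s' := by
  refine (FM_map _ _ _ _ _ _ _).trans (Eq.trans ?_ (FM_map E ζ c M a _ _).symm)
  refine congrArg₂ (· + ·) rfl ?_
  refine (Fintype.sum_option _).trans ?_
  have h0 : (∑ r : Fin (m (optC c j none) (optC c j (some s'))), optM c j M g none (some s') r •
      ζ (optC c j none) (optC c j (some s')) r a (w none)) = 0 :=
    Finset.sum_eq_zero fun r _ => zero_smul K _
  rw [h0]
  exact zero_add _

theorem ext_step (hm : ∀ i j, ¬ j < i → m i j = 0)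
    (hsurj : ∀ i j (γ : C1 (E i) (E j)), ∃ (φ : C0 (E i) (E j)) (g : Fin (m i j) → K),
      ∀ a x, γ a x = QuivRep.dmap (E i) (E j) φ a x + ∑ r, g r • ζ i j r a x)
    {S : Type} [Fintype S] (c : S → Fin l) (M : ∀ s s', Fin (m (c s) (c s')) → K)
    (j : Fin l) (W : QuivRep K V A t h) (ι : RepHom (E j) W) (p : RepHom W (FM E ζ c M))
    (hι : ∀ v, Function.Injective (ι.app v)) (hp : ∀ v, Function.Surjective (p.app v))
    (hpι : ∀ v x, p.app v (ι.app v x) = 0)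
    (hker : ∀ v y, p.app v y = 0 → ∃ x, ι.app v x = y) :
    ∃ g : ∀ s, Fin (m (c s) j) → K, RepIso K (FM E ζ (optC c j) (optM c j M g)) W := by
  have hs : ∀ v, ∃ s : (FM E ζ c M).sp v →ₗ[K] W.sp v, ∀ w, p.app v (s w) = w := fun v => by
    obtain ⟨s, hs⟩ := LinearMap.exists_rightInverse_of_surjective (p.app v)
      (LinearMap.range_eq_top.2 (hp v))
    exact ⟨s, fun w => LinearMap.congr_fun hs w⟩
  have hlam : ∀ v, ∃ lam : W.sp v →ₗ[K] (E j).sp v, ∀ x, lam (ι.app v x) = x := fun v => by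
    obtain ⟨s, hs⟩ := LinearMap.exists_leftInverse_of_injective (ι.app v)
      (LinearMap.ker_eq_bot.2 (hι v))
    exact ⟨s, fun w => LinearMap.congr_fun hs w⟩
  choose s hs using hs
  choose lam hlam using hlam
  have hlam2 : ∀ v y, p.app v y = 0 → ι.app v (lam v y) = y := by
    intro v y hy
    obtain ⟨x, rfl⟩ := hker v y hy
    rw [hlam]
  let γ : C1 (FM E ζ c M) (E j) := fun a =>
    (lam (h a)).comp ((W.map a).comp (s (t a)) - (s (h a)).comp ((FM E ζ c M).map a))
  have hγ : ∀ a w, ι.app (h a) (γ a w) = W.map a (s (t a) w) - s (h a) ((FM E ζ c M).map a w) := by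
    intro a w
    refine hlam2 (h a) _ ?_
    change p.app (h a) (W.map a (s (t a) w) - s (h a) ((FM E ζ c M).map a w)) = 0
    rw [map_sub, repHom_apply, hs, hs, sub_self]
  obtain ⟨φ, g, hφ⟩ := normalize E ζ hm hsurj c M j γ
  refine ⟨g, ?_⟩
  let s' : ∀ v, (FM E ζ c M).sp v →ₗ[K] W.sp v := fun v => s v + (ι.app v).comp (φ v)
  have hs' : ∀ v w, s' v w = s v w + ι.app v (φ v w) := fun v w => rfl
  have hps' : ∀ v w, p.app v (s' v w) = w := fun v w => by
    rw [hs', map_add, hpι, hs, add_zero]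
  have hc : ∀ a w, W.map a (s' (t a) w) = s' (h a) ((FM E ζ c M).map a w) +
      ι.app (h a) (∑ s, ∑ r, g s r • ζ (c s) j r a (w s)) := by
    intro a w
    rw [← hφ, map_sub, map_add, hγ, hs', hs', map_add, repHom_apply]
    abel
  have gen : ∀ a (x : (E j).sp (t a)) (w : (FM E ζ c M).sp (t a)),
      ι.app (h a) ((E j).map a x + ∑ s, ∑ r, g s r • ζ (c s) j r a (w s)) +
        s' (h a) ((FM E ζ c M).map a w) = W.map a (ι.app (t a) x + s' (t a) w) := by
    intro a x w
    rw [map_add, map_add, hc, repHom_apply]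
    abel
  have gen2 : ∀ v (x : (E j).sp v) (w : (FM E ζ c M).sp v),
      p.app v (ι.app v x + s' v w) = w := by
    intro v x w
    rw [map_add, hpι, hps', zero_add]
  have gen3 : ∀ v (x : (E j).sp v) (w : (FM E ζ c M).sp v),
      ι.app v x + s' v w = 0 → x = 0 ∧ w = 0 := by
    intro v x w h0
    have h1 := gen2 v x w
    rw [h0, map_zero] at h1
    rw [← h1, map_zero, add_zero] at h0
    exact ⟨hι v (h0.trans (map_zero _).symm), h1.symm⟩
  let T : ∀ v, (FM E ζ (optC c j) (optM c j M g)).sp v →ₗ[K] (FM E ζ c M).sp v := fun v =>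
    LinearMap.pi fun s => LinearMap.proj (φ := fun s => (E (optC c j s)).sp v) (some s)
  let T0 : ∀ v, (FM E ζ (optC c j) (optM c j M g)).sp v →ₗ[K] (E j).sp v := fun v =>
    LinearMap.proj (φ := fun s => (E (optC c j s)).sp v) none
  let Θ : RepHom (FM E ζ (optC c j) (optM c j M g)) W := ⟨fun v =>
    (ι.app v).comp (T0 v) + (s' v).comp (T v), by
      intro a
      refine LinearMap.ext fun w => ?_
      change ι.app (h a) ((FM E ζ (optC c j) (optM c j M g)).map a w none) +
        s' (h a) (fun s => (FM E ζ (optC c j) (optM c j M g)).map a w (some s)) =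
        W.map a (ι.app (t a) (w none) + s' (t a) (fun s => w (some s)))
      have this : (fun s => (FM E ζ (optC c j) (optM c j M g)).map a w (some s)) =
        (FM E ζ c M).map a (fun s => w (some s)) := funext fun s => optFM_some _ _ _ _ _ _ _ _ _
      exact (congrArg₂ (fun x y => ι.app (h a) x + s' (h a) y)
        (optFM_none E ζ c j M g a w) this).trans (gen a (w none) (fun s => w (some s)))⟩
  have hΘ : ∀ v w, Θ.app v w = ι.app v (w none) + s' v (fun s => w (some s)) := fun v w => rfl
  refine repIso_of_bij Θ fun v => ⟨?_, ?_⟩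
  · rw [injective_iff_map_eq_zero]
    intro w hw
    obtain ⟨h3, h1⟩ := gen3 v (w none) (fun s => w (some s)) hw
    funext s
    cases s with
    | none => exact h3
    | some s => exact congrFun h1 s
  · intro y
    obtain ⟨x, hx⟩ := hker v (y - s' v (p.app v y)) (by rw [map_sub, hps', sub_self])
    refine ⟨fun s => match s with
      | none => x
      | some s => p.app v y s, ?_⟩
    refine (hΘ v _).trans ?_
    change ι.app v x + s' v (p.app v y) = y
    rw [hx]
    abel

theorem ess {σ : V → ℤ} (hm : ∀ i j, ¬ j < i → m i j = 0)
    (hsurj : ∀ i j (γ : C1 (E i) (E j)), ∃ (φ : C0 (E i) (E j)) (g : Fin (m i j) → K),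
      ∀ a x, γ a x = QuivRep.dmap (E i) (E j) φ a x + ∑ r, g r • ζ i j r a x)
    (hall : ∀ W : QuivRep K V A t h, IsStable K σ W → ∃ j, RepIso K W (E j)) :
    ∀ (n : ℕ) (W : QuivRep K V A t h), IsSemistable K σ W → ∑ v, W.dimVec v = n →
    ∃ (S : Type) (_ : Fintype S) (c : S → Fin l) (M : ∀ s s', Fin (m (c s) (c s')) → K),
      RepIso K (FM E ζ c M) W := by
  intro n
  induction n using Nat.strong_induction_on with
  | _ n ih =>
  intro W hW hn
  by_cases hne : W.dimVec = fun _ => 0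
  · refine ⟨Empty, inferInstance, Empty.elim, fun s => s.elim, ?_⟩
    have hsub : ∀ v, Subsingleton (W.sp v) := fun v =>
      Module.finrank_zero_iff.1 (congrFun hne v)
    have hsub2 : ∀ v, Subsingleton ((FM E ζ (S := Empty) Empty.elim (fun s => s.elim)).sp v) :=
      fun v => ⟨fun x y => funext fun s => s.elim⟩
    exact ⟨fun v => LinearEquiv.ofSubsingleton _ _, fun a x => Subsingleton.elim _ _⟩
  · obtain ⟨U, hU, hq⟩ := exists_stable_sub hW hne
    obtain ⟨j, e, he⟩ := hall _ hU
    have hlt : ∑ v, (quotRep U).dimVec v < n := by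
      have h1 : ∑ v, (quotRep U).dimVec v + ∑ v, U.dimVec v = n := by
        rw [← hn, ← Finset.sum_add_distrib]
        exact Finset.sum_congr rfl fun v _ => quot_dim U v
      have h2 : ∑ v, U.dimVec v ≠ 0 := by
        intro h0
        apply hU.2.1
        funext v
        exact Finset.sum_eq_zero_iff.1 h0 v (Finset.mem_univ v)
      omega
    obtain ⟨S, hS, c, M, hM⟩ := ih _ hlt (quotRep U) hq rfl
    obtain ⟨f, hf⟩ := repIso_symm hM
    have hqmap : ∀ (a : A) (x : W.sp (t a)), (quotRep U).map a ((U.sub (t a)).mkQ x) =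
      (U.sub (h a)).mkQ (W.map a x) := fun a x => rfl
    let ι : RepHom (E j) W := ⟨fun v => (U.sub v).subtype.comp ((e v).symm :
        (E j).sp v →ₗ[K] (subRep U).sp v), by
      intro a
      refine LinearMap.ext fun x => ?_
      have : (e (h a)).symm ((E j).map a x) = (subRep U).map a ((e (t a)).symm x) := by
        rw [LinearEquiv.symm_apply_eq, he, LinearEquiv.apply_symm_apply]
      exact congrArg (U.sub (h a)).subtype this⟩
    let p : RepHom W (FM E ζ c M) := ⟨fun v => ((f v : (quotRep U).sp v →ₗ[K] _)).comp
        (U.sub v).mkQ, by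
      intro a
      refine LinearMap.ext fun x => ?_
      exact hf a ((U.sub (t a)).mkQ x)⟩
    obtain ⟨g, hg⟩ := ext_step E ζ hm hsurj c M j W ι p
      (fun v => (Submodule.injective_subtype _).comp (e v).symm.injective)
      (fun v => (f v).surjective.comp (Submodule.mkQ_surjective _))
      (fun v x => by
        have : (U.sub v).mkQ ((U.sub v).subtype ((e v).symm x)) = 0 := by
          rw [← LinearMap.mem_ker, Submodule.ker_mkQ]
          exact ((e v).symm x).2
        change f v ((U.sub v).mkQ ((U.sub v).subtype ((e v).symm x))) = 0
        erw [this]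
        exact map_zero (f v))
      (fun v y hy => by
        have h1 : f v ((U.sub v).mkQ y) = 0 := hy
        have h2 : (U.sub v).mkQ y = 0 := (f v).injective (h1.trans (map_zero (f v)).symm)
        rw [← LinearMap.mem_ker, Submodule.ker_mkQ] at h2
        refine ⟨e v (⟨y, h2⟩ : U.sub v), ?_⟩
        change (U.sub v).subtype ((e v).symm (e v (⟨y, h2⟩ : U.sub v))) = y
        exact congrArg (U.sub v).subtype ((e v).symm_apply_apply (⟨y, h2⟩ : U.sub v)))
    exact ⟨Option S, inferInstance, _, _, hg⟩

theorem FM_sigma_to_FB {ι : Fin l → Type} [∀ i, Fintype (ι i)]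
    (M : ∀ s s' : (Σ i, ι i), Fin (m s.1 s'.1) → K) :
    ∃ X : R' K m, RepIso K (FB E ζ X fun i => Module.finBasis K (X.sp i))
      (FM E ζ (S := Σ i, ι i) Sigma.fst M) := by
  classical
  let X : R' K m := 
    { sp := fun i => ι i → K
      map := fun x => Matrix.mulVecLin (Matrix.of fun (q : ι x.2.1) (p : ι x.1) =>
        M ⟨x.1, p⟩ ⟨x.2.1, q⟩ x.2.2) }
  have hb : coef X (fun i => Pi.basisFun K (ι i)) = M := by
    funext s s' r
    change (Matrix.mulVecLin (Matrix.of fun (q : ι s'.1) (p : ι s.1) =>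
        M ⟨s.1, p⟩ ⟨s'.1, q⟩ r)) (Pi.basisFun K (ι s.1) s.2) s'.2 = _
    rw [Pi.basisFun_apply, Matrix.mulVecLin_apply, Matrix.mulVec_single_one]
    rfl
  refine ⟨X, ?_⟩
  rw [← hb]
  exact FBh_iso E ζ _ _

theorem FM_to_FB {S : Type} [Fintype S] (c : S → Fin l)
    (M : ∀ s s', Fin (m (c s) (c s')) → K) :
    ∃ X : R' K m, RepIso K (FB E ζ X fun i => Module.finBasis K (X.sp i)) (FM E ζ c M) := by
  classical
  let e : (Σ i, {s // c s = i}) ≃ S := Equiv.sigmaFiberEquiv c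
  have key : ∀ (c1 : (Σ i, {s // c s = i}) → Fin l) (hc1 : c1 = Sigma.fst)
      (M1 : ∀ s s', Fin (m (c1 s) (c1 s')) → K),
      ∃ X : R' K m, RepIso K (FB E ζ X fun i => Module.finBasis K (X.sp i)) (FM E ζ c1 M1) := by
    intro c1 hc1
    subst hc1
    intro M1
    exact FM_sigma_to_FB E ζ M1
  obtain ⟨X, hX⟩ := key (fun s => c (e s)) (funext fun s => s.2.2) (fun s s' => M (e s) (e s'))
  exact ⟨X, repIso_trans hX (repIso_symm (TS_reindex e _ _))⟩

theorem simple_iso (hm : ∀ i j, ¬ j < i → m i j = 0) (X : R' K m) (i : Fin l)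
    (hX : X.dimVec = fun j => if j = i then 1 else 0) :
    RepIso K (FB E ζ X fun i => Module.finBasis K (X.sp i)) (E i) := by
  classical
  have hXi : Module.finrank K (X.sp i) = 1 := by
    have := congrFun hX i
    simpa [QuivRep.dimVec] using this
  have hXj : ∀ j, j ≠ i → Module.finrank K (X.sp j) = 0 := by
    intro j hj
    have := congrFun hX j
    simpa [QuivRep.dimVec, hj] using this
  let p0 : Fin (Module.finrank K (X.sp i)) := ⟨0, by omega⟩
  let s0 : Σ j, Fin (Module.finrank K (X.sp j)) := ⟨i, p0⟩
  have huniq : ∀ s : Σ j, Fin (Module.finrank K (X.sp j)), s = s0 := by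
    rintro ⟨j, q⟩
    by_cases hj : j = i
    · subst hj
      have : q = p0 := Fin.ext (by have := q.2; change (q : ℕ) = 0; omega)
      rw [this]
    · exact absurd q.2 (by have := hXj j hj; omega)
  let f : RepHom (FB E ζ X fun i => Module.finBasis K (X.sp i)) (E i) :=
    ⟨fun v => LinearMap.proj (φ := fun s : (Σ j, Fin (Module.finrank K (X.sp j))) =>
      (E s.1).sp v) s0, by
      intro a
      refine LinearMap.ext fun w => ?_
      refine (FM_map _ _ _ _ _ _ _).trans ?_
      rw [Finset.sum_eq_zero, add_zero]
      · rfl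
      · intro s _
        rw [huniq s]
        exact sum_fin_zero (hm _ _ (lt_irrefl _)) _⟩
  refine repIso_of_bij f fun v => ⟨?_, ?_⟩
  · intro x y hxy
    funext s
    rw [huniq s]
    exact hxy
  · intro y
    have hex : ∃ w : ∀ s : (Σ j, Fin (Module.finrank K (X.sp j))), (E s.1).sp v, w s0 = y :=
      ⟨Function.update (fun _ => 0) s0 y, by simp⟩
    exact hex

end Ess

section Final

variable {K} {t h : A → V}

theorem stable_semistable {σ : V → ℤ} {X : QuivRep K V A t h} (hX : IsStable K σ X) :
    IsSemistable K σ X := by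
  refine ⟨hX.1, fun U => ?_⟩
  by_cases h0 : U.dimVec = fun _ => 0
  · rw [h0]; simp
  by_cases h1 : U.dimVec = X.dimVec
  · rw [h1, hX.1]
  · exact (hX.2.2 U h0 h1).le

/-- Representatives of a basis of the extension space. -/
theorem exists_zeta (X Y : QuivRep K V A t h) (n : ℕ) (hn : QuivRep.extDim X Y = n) :
    ∃ ζ : Fin n → C1 X Y,
      (∀ γ : C1 X Y, ∃ (φ : C0 X Y) (g : Fin n → K),
        ∀ a x, γ a x = QuivRep.dmap X Y φ a x + ∑ r, g r • ζ r a x) ∧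
      (∀ (g : Fin n → K) (φ : C0 X Y),
        (∀ a x, QuivRep.dmap X Y φ a x = ∑ r, g r • ζ r a x) → g = 0) := by
  let R := LinearMap.range (QuivRep.dmap X Y)
  let b : Module.Basis (Fin n) K (C1 X Y ⧸ R) := Module.finBasisOfFinrankEq K _ hn
  choose ζ hζ using fun r => Submodule.mkQ_surjective R (b r)
  have hsum : ∀ (g : Fin n → K) a x, (∑ r, g r • ζ r) a x = ∑ r, g r • ζ r a x := by
    intro g a x
    simp [Finset.sum_apply, LinearMap.sum_apply]
  have hmk : ∀ g : Fin n → K, R.mkQ (∑ r, g r • ζ r) = ∑ r, g r • b r := by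
    intro g
    simp only [map_sum, map_smul, hζ]
  refine ⟨ζ, fun γ => ?_, fun g φ hg => ?_⟩
  · let g : Fin n → K := fun r => b.repr (R.mkQ γ) r
    have h1 : R.mkQ (γ - ∑ r, g r • ζ r) = 0 := by
      rw [map_sub, hmk, b.sum_repr, sub_self]
    rw [← LinearMap.mem_ker, Submodule.ker_mkQ] at h1
    obtain ⟨φ, hφ⟩ := h1
    refine ⟨φ, g, fun a x => ?_⟩
    rw [hφ, ← hsum]
    simp
  · have h1 : QuivRep.dmap X Y φ = ∑ r, g r • ζ r := by
      funext a
      ext x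
      rw [hg, hsum]
    have h2 : R.mkQ (∑ r, g r • ζ r) = 0 := by
      rw [← h1, ← LinearMap.mem_ker, Submodule.ker_mkQ]
      exact ⟨φ, rfl⟩
    rw [hmk] at h2
    funext r
    exact Fintype.linearIndependent_iff.1 b.linearIndependent g h2 r

end Final

theorem main [IsAlgClosed K] (t h : A → V)
    (σ : V → ℤ)
    (l : ℕ) (E : Fin l → QuivRep K V A t h)
    (hstab : ∀ j, IsStable K σ (E j))
    (hnoniso : ∀ j k, j ≠ k → ¬ RepIso K (E j) (E k))
    (hQES : IsQES K t h (fun j => (E j).dimVec)) :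
    (∀ i j, QuivRep.extDim (E i) (E j) = extMult t h (fun j => (E j).dimVec) i j) ∧
    (∀ i j, ¬ j < i → extMult t h (fun j => (E j).dimVec) i j = 0) := by
  have hself : ∀ i, QuivRep.extDim (E i) (E i) = 0 := by
    intro i
    obtain ⟨X, hXd, hXr, hXs⟩ := hQES.1 i
    have h1 := euler_hom_ext X X
    have h2 := euler_hom_ext (E i) (E i)
    have hr : QuivRep.extDim X X = 0 := hXr
    have hs : QuivRep.homDim X X = 1 := hXs
    have hh : QuivRep.homDim (E i) (E i) = 1 :=
      homDim_one_of (stable_nonzero (hstab i)) (schur_scalar (hstab i))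
    have hXd' : X.dimVec = (E i).dimVec := hXd
    rw [hr, hs, hXd', ← h2, hh] at h1
    omega
  have hhom : ∀ i j, i ≠ j → QuivRep.homDim (E i) (E j) = 0 := fun i j hij =>
    homDim_zero_of (schur_zero (hstab i) (hstab j) (hnoniso i j hij))
  have hlt : ∀ i j, i < j → eulerForm t h (natZ (E i).dimVec) (natZ (E j).dimVec) = 0 := by
    intro i j hij
    obtain ⟨h1, h2, -⟩ := hQES.2 i j hij
    have hne1 : {n | ∃ X Y : QuivRep K V A t h, X.dimVec = (E i).dimVec ∧
        Y.dimVec = (E j).dimVec ∧ QuivRep.homDim X Y = n}.Nonempty :=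
      ⟨_, E i, E j, rfl, rfl, rfl⟩
    have hne2 : {n | ∃ X Y : QuivRep K V A t h, X.dimVec = (E i).dimVec ∧
        Y.dimVec = (E j).dimVec ∧ QuivRep.extDim X Y = n}.Nonempty :=
      ⟨_, E i, E j, rfl, rfl, rfl⟩
    obtain ⟨X, Y, hX, hY, hXY⟩ := Nat.sInf_mem hne1
    obtain ⟨X', Y', hX', hY', hXY'⟩ := Nat.sInf_mem hne2
    have e1 : QuivRep.homDim X Y = 0 := hXY.trans h1
    have e2 : QuivRep.extDim X' Y' = 0 := hXY'.trans h2
    have h3 := euler_hom_ext X Y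
    have h4 := euler_hom_ext X' Y'
    rw [hX, hY, e1] at h3
    rw [hX', hY', e2] at h4
    omega
  constructor
  · intro i j
    unfold extMult
    split_ifs with hij
    · subst hij; exact hself i
    · have h1 := euler_hom_ext (E i) (E j)
      rw [hhom i j hij] at h1
      rw [← h1]
      omega
  · intro i j hij
    unfold extMult
    split_ifs with hne
    · rfl
    · have : i < j := lt_of_le_of_ne (not_lt.1 hij) hne
      have h1 := hlt i j this
      simp only [h1]
      rfl

end SchofAux
/-- Schofield's Embedding Theorem. With `E_1, …, E_l` the pairwise
non-isomorphic `σ`-stable representations, ordered so that `(dim E_1, …, dim E_l)` is a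
quiver exceptional sequence `𝓔`, there is a `K`-linear equivalence from `rep(Q(𝓔))` onto
the full subcategory of `σ`-semi-stable representations of `Q`, sending the simple at
vertex `i` to a representation isomorphic to `E_i`. -/
theorem stmt5 [IsAlgClosed K] [CharZero K] (t h : A → V) (hQ : Acyclic t h)
    (α : V → ℕ) (hα : α ≠ (fun _ => 0))
    (hpre : ∃ X : QuivRep K V A t h, X.dimVec = α ∧ X.IsRigid)
    (σ : V → ℤ) (hσ : σ = weightL t h (natZ α) ∨ σ = weightR t h (natZ α))
    (l : ℕ) (E : Fin l → QuivRep K V A t h)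
    (hstab : ∀ j, IsStable K σ (E j))
    (hnoniso : ∀ j k, j ≠ k → ¬ RepIso K (E j) (E k))
    (hall : ∀ W : QuivRep K V A t h, IsStable K σ W → ∃ j, RepIso K W (E j))
    (hQES : IsQES K t h (fun j => (E j).dimVec)) :
    ∃ (Fobj : QuivRep K (Fin l) (ExtArrow t h fun j => (E j).dimVec)
          (fun x => x.1) (fun x => x.2.1) → QuivRep K V A t h)
      (Fmap : ∀ X Y, RepHom X Y → RepHom (Fobj X) (Fobj Y)),
      (∀ X, IsSemistable K σ (Fobj X)) ∧
      (∀ X, Fmap X X (RepHom.idHom X) = RepHom.idHom (Fobj X)) ∧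
      (∀ X Y Z (f : RepHom X Y) (g : RepHom Y Z),
        Fmap X Z (f.comp g) = (Fmap X Y f).comp (Fmap Y Z g)) ∧
      (∀ X Y (f g : RepHom X Y), Fmap X Y (f.add g) = (Fmap X Y f).add (Fmap X Y g)) ∧
      (∀ X Y (c : K) (f : RepHom X Y),
        Fmap X Y (RepHom.smul c f) = RepHom.smul c (Fmap X Y f)) ∧
      (∀ X Y, Function.Injective (Fmap X Y)) ∧
      (∀ X Y (ψ : RepHom (Fobj X) (Fobj Y)), ∃ φ, Fmap X Y φ = ψ) ∧
      (∀ W : QuivRep K V A t h, IsSemistable K σ W → ∃ X, RepIso K (Fobj X) W) ∧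
      (∀ (i : Fin l) X, X.dimVec = (fun j => if j = i then 1 else 0) →
        RepIso K (Fobj X) (E i)) := by
  classical
  obtain ⟨hext, hm⟩ := SchofAux.main K t h σ l E hstab hnoniso hQES
  choose ζ hsurj hlin using fun i j => SchofAux.exists_zeta (E i) (E j) _ (hext i j)
  refine ⟨fun X => SchofAux.FB E ζ X fun i => Module.finBasis K (X.sp i),
    fun X Y f => SchofAux.FBh E ζ _ _ f, ?_, ?_, ?_, ?_, ?_, ?_, ?_, ?_, ?_⟩
  · exact fun X => SchofAux.FM_semistable E ζ hm
      (fun i => SchofAux.stable_semistable (hstab i)) _ _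
  · exact fun X => SchofAux.FBh_id E ζ _
  · exact fun X Y Z f g => SchofAux.FBh_comp E ζ _ _ _ f g
  · exact fun X Y f g => SchofAux.FBh_add E ζ _ _ f g
  · exact fun X Y c f => SchofAux.FBh_smul E ζ _ _ c f
  · exact fun X Y => SchofAux.FBh_inj E ζ (fun i => SchofAux.stable_nonzero (hstab i)) _ _
  · exact fun X Y ψ => SchofAux.FBh_full E ζ hm
      (fun i j hij => SchofAux.schur_zero (hstab i) (hstab j) (hnoniso i j hij))
      (fun i => SchofAux.schur_scalar (hstab i)) hlin _ _ ψ
  · intro W hW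
    obtain ⟨S, _, c, M, hM⟩ := SchofAux.ess E ζ hm hsurj hall _ W hW rfl
    obtain ⟨X, hX⟩ := SchofAux.FM_to_FB E ζ c M
    exact ⟨X, SchofAux.repIso_trans hX hM⟩
  · exact fun i X hX => SchofAux.simple_iso E ζ hm X i hX

end
end

section
/- Let α be a dimension vector of Q and V a rigid representation with dim V = α, and set σ = ⟨α,·⟩. Then a representation W of Q is σ-semi-stable if and only if Hom_Q(V,W)=0 and Ext^1_Q(V,W)=0. -/
set_option autoImplicit false

noncomputable section

open scoped BigOperators

/-! Basic setup for representations of a quiver with vertex set `V`, arrow set `A`,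
tail map `t` and head map `h`, over a field `K`. -/

variable (K : Type) [Field K]
variable {V A : Type} [Fintype V] [DecidableEq V] [Fintype A]

section Helpers

variable {K} {t h : A → V}

/-- A subrepresentation regarded as a representation. -/
def QuivRep.Sub.toQ {X : QuivRep K V A t h} (U : QuivRep.Sub X) : QuivRep K V A t h where
  sp i := U.sub i
  map a := (X.map a).restrict (U.le a)

lemma ker_dmap (X Y : QuivRep K V A t h) :
    LinearMap.ker (QuivRep.dmap X Y) = QuivRep.homS X Y := by
  ext φ
  rw [LinearMap.mem_ker]
  constructor
  · intro H a
    exact sub_eq_zero.1 (congrFun H a)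
  · intro H
    funext a
    exact sub_eq_zero.2 (H a)

lemma homDim_eq_zero (X Y : QuivRep K V A t h) :
    QuivRep.homDim X Y = 0 ↔ ∀ φ ∈ QuivRep.homS X Y, φ = 0 := by
  rw [QuivRep.homDim, Submodule.finrank_eq_zero, Submodule.eq_bot_iff]

lemma extDim_eq_zero (X Y : QuivRep K V A t h) :
    QuivRep.extDim X Y = 0 ↔ Function.Surjective (QuivRep.dmap X Y) := by
  have := Submodule.finrank_quotient_add_finrank (LinearMap.range (QuivRep.dmap X Y))
  rw [QuivRep.extDim, ← LinearMap.range_eq_top]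
  constructor
  · intro H
    rw [H, zero_add] at this
    exact Submodule.eq_top_of_finrank_eq this
  · intro H
    rw [H, finrank_top] at this
    rw [H]
    omega

lemma weight_sum (t h : A → V) (x y : V → ℤ) :
    ∑ i, weightL t h x i * y i = eulerForm t h x y := by
  simp only [weightL, eulerForm, mul_ite, mul_one, mul_zero, sub_mul, Finset.sum_sub_distrib]
  congr 1
  · simp
  · simp only [Finset.sum_mul]
    rw [Finset.sum_comm]
    simp

lemma euler_eq (X Y : QuivRep K V A t h) :
    ∑ i, weightL t h (natZ X.dimVec) i * (Y.dimVec i : ℤ) =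
      (QuivRep.homDim X Y : ℤ) - QuivRep.extDim X Y := by
  have h1 := weight_sum t h (natZ X.dimVec) (natZ Y.dimVec)
  have h2 := LinearMap.finrank_range_add_finrank_ker (QuivRep.dmap X Y)
  have h3 := Submodule.finrank_quotient_add_finrank (LinearMap.range (QuivRep.dmap X Y))
  rw [ker_dmap] at h2
  rw [Module.finrank_pi_fintype] at h2 h3
  simp only [Module.finrank_linearMap] at h2 h3
  change QuivRep.extDim X Y + _ = _ at h3
  change _ + QuivRep.homDim X Y = _ at h2
  zify at h2 h3
  simp only [natZ, eulerForm, QuivRep.dimVec] at h1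
  simp only [natZ, QuivRep.dimVec]
  linarith

/-- The universal map `X^n → W` attached to a basis of `Hom(X,W)`. -/
def evMap (X W : QuivRep K V A t h) (i : V) :
    (Fin (Module.finrank K (QuivRep.homS X W)) → X.sp i) →ₗ[K] W.sp i :=
  ∑ k, ((Module.finBasis K (QuivRep.homS X W) k).1 i).comp (LinearMap.proj k)

lemma evMap_apply (X W : QuivRep K V A t h) (i : V)
    (x : Fin (Module.finrank K (QuivRep.homS X W)) → X.sp i) :
    evMap X W i x = ∑ k, (Module.finBasis K (QuivRep.homS X W) k).1 i (x k) := by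
  simp [evMap]

/-- The trace of `X` in `W`. -/
def traceSub (X W : QuivRep K V A t h) : QuivRep.Sub W where
  sub i := LinearMap.range (evMap X W i)
  le a := by
    rintro _ ⟨x, rfl⟩
    refine ⟨fun k => X.map a (x k), ?_⟩
    rw [evMap_apply, evMap_apply, map_sum]
    refine Finset.sum_congr rfl fun k _ => ?_
    exact LinearMap.congr_fun ((Module.finBasis K (QuivRep.homS X W) k).2 a) (x k)

lemma mem_trace (X W : QuivRep K V A t h) (φ : QuivRep.homS X W) (i : V) (x : X.sp i) :
    φ.1 i x ∈ (traceSub X W).sub i := by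
  refine ⟨fun k => (Module.finBasis K (QuivRep.homS X W)).repr φ k • x, ?_⟩
  rw [evMap_apply]
  have e := congrArg (fun f : QuivRep.homS X W => f.1 i x)
    ((Module.finBasis K (QuivRep.homS X W)).sum_repr φ)
  rw [← e]
  simp [-Module.Basis.sum_repr]

lemma trace_ext (X W : QuivRep K V A t h) (hrig : X.IsRigid) :
    QuivRep.extDim X (traceSub X W).toQ = 0 := by
  have hs := (extDim_eq_zero X X).1 hrig
  rw [extDim_eq_zero]
  intro ψ
  have hl : ∀ a, ∃ g : X.sp (t a) →ₗ[K]
      (Fin (Module.finrank K (QuivRep.homS X W)) → X.sp (h a)),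
      (evMap X W (h a)).rangeRestrict.comp g = ψ a := fun a =>
    Module.projective_lifting_property (evMap X W (h a)).rangeRestrict (ψ a)
      (LinearMap.surjective_rangeRestrict _)
  choose g hg using hl
  choose θ hθ using fun k => hs (fun a => (LinearMap.proj k).comp (g a))
  refine ⟨fun i => (evMap X W i).rangeRestrict.comp (LinearMap.pi fun k => θ k i), ?_⟩
  funext a
  rw [← hg a]
  refine LinearMap.ext fun x => Subtype.ext ?_
  have e : ∀ k, θ k (h a) (X.map a x) - X.map a (θ k (t a) x) = g a x k := fun k =>
    LinearMap.congr_fun (congrFun (hθ k) a) x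
  have c : W.map a (evMap X W (t a) (fun k => θ k (t a) x)) =
      evMap X W (h a) (fun k => X.map a (θ k (t a) x)) := by
    rw [evMap_apply, evMap_apply, map_sum]
    refine Finset.sum_congr rfl fun k _ => ?_
    exact (LinearMap.congr_fun ((Module.finBasis K (QuivRep.homS X W) k).2 a) _).symm
  change evMap X W (h a) (fun k => θ k (h a) (X.map a x)) -
    W.map a (evMap X W (t a) (fun k => θ k (t a) x)) = evMap X W (h a) (g a x)
  rw [c, ← map_sub]
  congr 1
  funext k
  exact e k

lemma hom_of_trace (X W : QuivRep K V A t h)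
    (H : QuivRep.homDim X (traceSub X W).toQ = 0) : QuivRep.homDim X W = 0 := by
  rw [homDim_eq_zero] at H ⊢
  intro φ hφ
  have := H (fun i => (φ i).codRestrict _ (mem_trace X W ⟨φ, hφ⟩ i)) (by
    intro a
    refine LinearMap.ext fun x => Subtype.ext ?_
    exact LinearMap.congr_fun (hφ a) x)
  funext i
  refine LinearMap.ext fun x => ?_
  exact congrArg Subtype.val (LinearMap.congr_fun (congrFun this i) x)

lemma hom_sub_zero (X W : QuivRep K V A t h) (U : QuivRep.Sub W)
    (H : QuivRep.homDim X W = 0) : QuivRep.homDim X U.toQ = 0 := by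
  rw [homDim_eq_zero] at H ⊢
  intro φ hφ
  have := H (fun i => (U.sub i).subtype.comp (φ i)) (by
    intro a
    refine LinearMap.ext fun x => ?_
    exact congrArg Subtype.val (LinearMap.congr_fun (hφ a) x))
  funext i
  refine LinearMap.ext fun x => Subtype.ext ?_
  exact LinearMap.congr_fun (congrFun this i) x

end Helpers

/-- If `V` is a rigid representation of dimension vector `α` and
`σ = ⟨α,·⟩`, then `W` is `σ`-semi-stable iff `Hom_Q(V,W) = 0` and `Ext¹_Q(V,W) = 0`. -/
theorem stmt6 [IsAlgClosed K] [CharZero K] (t h : A → V) (hQ : Acyclic t h)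
    (α : V → ℕ) (X : QuivRep K V A t h) (hX : X.dimVec = α) (hrig : X.IsRigid)
    (W : QuivRep K V A t h) :
    IsSemistable K (weightL t h (natZ α)) W ↔
      QuivRep.homDim X W = 0 ∧ QuivRep.extDim X W = 0 := by
  subst hX
  constructor
  · rintro ⟨h0, hU⟩
    have h1 := hU (traceSub X W)
    have h2 := euler_eq X (traceSub X W).toQ
    have h3 := trace_ext X W hrig
    have h4 : QuivRep.homDim X W = 0 := by
      apply hom_of_trace
      change ∑ i, weightL t h (natZ X.dimVec) i * ((traceSub X W).dimVec i : ℤ) = _ at h2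
      omega
    have h5 := euler_eq X W
    exact ⟨h4, by omega⟩
  · rintro ⟨h1, h2⟩
    refine ⟨by rw [euler_eq, h1, h2]; simp, fun U => ?_⟩
    have h3 := euler_eq X U.toQ
    change ∑ i, weightL t h (natZ X.dimVec) i * (U.dimVec i : ℤ) = _ at h3
    rw [h3, hom_sub_zero X W U h1]
    simp

end
end
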